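/- Let A be a dg algebra over F₂ that is homologically smooth, and let M be a bounded dg (A,A)-bimodule. Then both spectral sequences ^{hv}E^r_{p,q} and ^{vh}E^r_{p,q} attached to the Hochschild–Tate bicomplex HC^Tate(A, M ⊗̃_A M) converge to the homology of the total complex of HC^Tate. -/

import Mathlib

noncomputable section
open TensorProduct

namespace LT

/-- A differential graded (dg) algebra over a commutative ring `k`: a chain complex with a
degree `-1` differential together with an associative unital multiplication satisfying the
(signed) Leibniz rule; over `𝔽₂` the signs are invisible. The grading is given by an internal
direct sum decomposition into submodules. -/
structure DGA (k : Type) [CommRing k] : Type 1 where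
  V : Type
  [acg : AddCommGroup V]
  [mod : Module k V]
  gr : ℤ → Submodule k V
  internal : DirectSum.IsInternal gr
  d : V →ₗ[k] V
  d_d : ∀ x, d (d x) = 0
  d_gr : ∀ i, ∀ x ∈ gr i, d x ∈ gr (i - 1)
  mul : V →ₗ[k] V →ₗ[k] V
  mul_assoc' : ∀ x y z, mul (mul x y) z = mul x (mul y z)
  one : V
  one_gr : one ∈ gr 0
  one_mul' : ∀ x, mul one x = x
  mul_one' : ∀ x, mul x one = x
  mul_gr : ∀ i j, ∀ x ∈ gr i, ∀ y ∈ gr j, mul x y ∈ gr (i + j)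
  leibniz : ∀ i, ∀ x ∈ gr i, ∀ y, d (mul x y) = mul (d x) y + (Int.negOnePow i : ℤ) • mul x (d y)

attribute [instance] DGA.acg
attribute [instance 2000] DGA.mod

variable {k : Type} [CommRing k]

/-- A dg `(A,A)`-bimodule over a dg algebra `A`. -/
structure DGBimod (A : DGA k) : Type 1 where
  V : Type
  [acg : AddCommGroup V]
  [mod : Module k V]
  gr : ℤ → Submodule k V
  internal : DirectSum.IsInternal gr
  d : V →ₗ[k] V
  d_d : ∀ x, d (d x) = 0
  d_gr : ∀ i, ∀ x ∈ gr i, d x ∈ gr (i - 1)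
  actL : A.V →ₗ[k] V →ₗ[k] V
  actR : V →ₗ[k] A.V →ₗ[k] V
  actL_one : ∀ m, actL A.one m = m
  actR_one : ∀ m, actR m A.one = m
  actL_mul : ∀ a b m, actL (A.mul a b) m = actL a (actL b m)
  actR_mul : ∀ m a b, actR (actR m a) b = actR m (A.mul a b)
  actLR : ∀ a m b, actR (actL a m) b = actL a (actR m b)
  actL_gr : ∀ i j, ∀ a ∈ A.gr i, ∀ m ∈ gr j, actL a m ∈ gr (i + j)
  actR_gr : ∀ i j, ∀ m ∈ gr i, ∀ a ∈ A.gr j, actR m a ∈ gr (i + j)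
  leibnizL : ∀ i, ∀ a ∈ A.gr i, ∀ m, d (actL a m) = actL (A.d a) m + (Int.negOnePow i : ℤ) • actL a (d m)
  leibnizR : ∀ j, ∀ m ∈ gr j, ∀ a, d (actR m a) = actR (d m) a + (Int.negOnePow j : ℤ) • actR m (A.d a)

attribute [instance] DGBimod.acg
attribute [instance 2000] DGBimod.mod

/-- The diagonal bimodule: `A` viewed as a bimodule over itself. -/
def DGA.diag (A : DGA k) : DGBimod A where
  V := A.V
  gr := A.gr
  internal := A.internal
  d := A.d
  d_d := A.d_d
  d_gr := A.d_gr
  actL := A.mul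
  actR := A.mul
  actL_one := A.one_mul'
  actR_one := A.mul_one'
  actL_mul := fun a b m => A.mul_assoc' a b m
  actR_mul := fun m a b => A.mul_assoc' m a b
  actLR := fun a m b => A.mul_assoc' a m b
  actL_gr := A.mul_gr
  actR_gr := A.mul_gr
  leibnizL := A.leibniz
  leibnizR := A.leibniz

variable {A : DGA k}

/-- A homomorphism of dg bimodules of degree `s`: a linear map raising degree by `s`,
commuting with the differentials and the two actions. -/
def IsBHom (M N : DGBimod A) (s : ℤ) (f : M.V →ₗ[k] N.V) : Prop :=
  (∀ i, ∀ x ∈ M.gr i, f x ∈ N.gr (i + s)) ∧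
  (∀ x, f (M.d x) = N.d (f x)) ∧
  (∀ a m, f (M.actL a m) = N.actL a (f m)) ∧
  (∀ m a, f (M.actR m a) = N.actR (f m) a)

/-- Graded maps of degree `s` compatible with the bimodule actions (no compatibility with the
differential required); these are used as homotopies. -/
def grHomSub (M N : DGBimod A) (s : ℤ) : Submodule k (M.V →ₗ[k] N.V) where
  carrier := {f | (∀ i, ∀ x ∈ M.gr i, f x ∈ N.gr (i + s)) ∧
    (∀ a m, f (M.actL a m) = N.actL a (f m)) ∧
    (∀ m a, f (M.actR m a) = N.actR (f m) a)}
  add_mem' := by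
    rintro f g ⟨hf1, hf2, hf3⟩ ⟨hg1, hg2, hg3⟩
    refine ⟨fun i x hx => ?_, fun a m => ?_, fun m a => ?_⟩ <;>
      simp [LinearMap.add_apply, hf2, hg2, hf3, hg3]
    exact Submodule.add_mem _ (hf1 i x hx) (hg1 i x hx)
  zero_mem' := by
    refine ⟨fun i x hx => ?_, fun a m => ?_, fun m a => ?_⟩ <;> simp
  smul_mem' := by
    rintro c f ⟨hf1, hf2, hf3⟩
    refine ⟨fun i x hx => ?_, fun a m => ?_, fun m a => ?_⟩ <;>
      simp [LinearMap.smul_apply, hf2, hf3]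
    exact Submodule.smul_mem _ _ (hf1 i x hx)

/-- Bimodule chain maps of degree `s`, as a submodule of all linear maps. -/
def bcmSub (M N : DGBimod A) (s : ℤ) : Submodule k (M.V →ₗ[k] N.V) where
  carrier := {f | IsBHom M N s f}
  add_mem' := by
    rintro f g ⟨hf1, hf0, hf2, hf3⟩ ⟨hg1, hg0, hg2, hg3⟩
    refine ⟨fun i x hx => ?_, fun x => ?_, fun a m => ?_, fun m a => ?_⟩ <;>
      simp [LinearMap.add_apply, hf0, hg0, hf2, hg2, hf3, hg3]
    exact Submodule.add_mem _ (hf1 i x hx) (hg1 i x hx)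
  zero_mem' := by
    refine ⟨fun i x hx => ?_, fun x => ?_, fun a m => ?_, fun m a => ?_⟩ <;> simp
  smul_mem' := by
    rintro c f ⟨hf1, hf0, hf2, hf3⟩
    refine ⟨fun i x hx => ?_, fun x => ?_, fun a m => ?_, fun m a => ?_⟩ <;>
      simp [LinearMap.smul_apply, hf0, hf2, hf3]
    exact Submodule.smul_mem _ _ (hf1 i x hx)

/-- The nullhomotopic degree-`s` maps `d ∘ h + h ∘ d` for `h` a degree `s+1` bimodule map. -/
def nullHtpSub (M N : DGBimod A) (s : ℤ) : Submodule k (M.V →ₗ[k] N.V) :=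
  Submodule.map
    ((LinearMap.llcomp k M.V N.V N.V N.d) + (LinearMap.lcomp k N.V M.d))
    (grHomSub M N (s + 1))

/-- Homotopy classes of degree-`s` bimodule chain maps `M → N`; for `M` a cell retract this
computes morphisms `Σ^s M → N` in the derived category of dg bimodules. -/
def HtpyHom (M N : DGBimod A) (s : ℤ) :=
  bcmSub M N s ⧸ Submodule.comap (bcmSub M N s).subtype (nullHtpSub M N s)

instance (M N : DGBimod A) (s : ℤ) : AddCommGroup (HtpyHom M N s) :=
  inferInstanceAs (AddCommGroup (_ ⧸ _))
instance (M N : DGBimod A) (s : ℤ) : Module k (HtpyHom M N s) :=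
  inferInstanceAs (Module k (_ ⧸ _))


/-- Homology in degree `n` of a graded module with "relations": the degree-`n` part of the
homology of the quotient complex `(T/N, d)` where the grading of `T/N` is induced by `gr`.
Taking `N = ⊥` gives ordinary graded homology. -/
def Hgr (T : Type) [AddCommGroup T] [Module k T] (gr : ℤ → Submodule k T)
    (N : Submodule k T) (d : T →ₗ[k] T) (n : ℤ) : Type :=
  ↥((gr n ⊔ N) ⊓ Submodule.comap d N) ⧸
    Submodule.comap ((gr n ⊔ N) ⊓ Submodule.comap d N).subtype
      (Submodule.map d (gr (n + 1) ⊔ N) ⊔ N)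

instance (T : Type) [AddCommGroup T] [Module k T] (gr : ℤ → Submodule k T)
    (N : Submodule k T) (d : T →ₗ[k] T) (n : ℤ) : AddCommGroup (Hgr T gr N d n) :=
  inferInstanceAs (AddCommGroup (_ ⧸ _))
instance (T : Type) [AddCommGroup T] [Module k T] (gr : ℤ → Submodule k T)
    (N : Submodule k T) (d : T →ₗ[k] T) (n : ℤ) : Module k (Hgr T gr N d n) :=
  inferInstanceAs (Module k (_ ⧸ _))

/-- `f` induces an isomorphism on (graded) homology, with a degree shift `s`; stated
elementarily: the induced map on homology classes is surjective and injective. -/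
def IsQIsoDeg (T S : Type) [AddCommGroup T] [Module k T] [AddCommGroup S] [Module k S]
    (grT : ℤ → Submodule k T) (grS : ℤ → Submodule k S)
    (dT : T →ₗ[k] T) (dS : S →ₗ[k] S) (s : ℤ) (f : T →ₗ[k] S) : Prop :=
  ∀ n : ℤ,
    (∀ y ∈ grS (n + s), dS y = 0 →
      ∃ x ∈ grT n, dT x = 0 ∧ f x - y ∈ Submodule.map dS (grS (n + s + 1))) ∧
    (∀ x ∈ grT n, dT x = 0 → f x ∈ Submodule.map dS (grS (n + s + 1)) →
      x ∈ Submodule.map dT (grT (n + 1)))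

variable {A : DGA k}

/-- The bilinear "sandwich" map `(a, b) ↦ a · m · b` for a fixed element `m` of a bimodule. -/
def sandwich (M : DGBimod A) (m : M.V) : A.V →ₗ[k] A.V →ₗ[k] M.V :=
  LinearMap.mk₂ k (fun a b => M.actR (M.actL a m) b)
    (fun a₁ a₂ b => by simp)
    (fun c a b => by simp)
    (fun a b₁ b₂ => by simp)
    (fun c a b => by simp)

/-- The bimodule map `A ⊗ A → M`, `a ⊗ b ↦ a · m · b`. -/
def sandwichT (M : DGBimod A) (m : M.V) : (A.V ⊗[k] A.V) →ₗ[k] M.V :=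
  TensorProduct.lift (sandwich M m)

/-- `S'/S` is a free dg bimodule: there is a family of "generators" `g i` of degrees `deg i`,
closed cycles modulo `S`, which generate `S'` freely over `A ⊗ A` modulo `S`. -/
def IsFreeStep (M : DGBimod A) (S S' : Submodule k M.V) : Prop :=
  ∃ (I : Type) (g : I → M.V) (deg : I → ℤ),
    (∀ i, g i ∈ S') ∧ (∀ i, M.d (g i) ∈ S) ∧
    (∀ i p q, ∀ a ∈ A.gr p, ∀ b ∈ A.gr q, M.actR (M.actL a (g i)) b ∈ M.gr (p + q + deg i)) ∧
    S' ≤ S ⊔ (⨆ i, LinearMap.range (sandwichT M (g i))) ∧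
    (∀ (u : Finset I) (c : I → A.V ⊗[k] A.V),
      (∑ i ∈ u, sandwichT M (g i) (c i)) ∈ S → ∀ i ∈ u, c i = 0)

/-- As `IsFreeStep`, with a finite generating family. -/
def IsFreeStepFin (M : DGBimod A) (S S' : Submodule k M.V) : Prop :=
  ∃ (I : Type) (_ : Finite I) (g : I → M.V) (deg : I → ℤ),
    (∀ i, g i ∈ S') ∧ (∀ i, M.d (g i) ∈ S) ∧
    (∀ i p q, ∀ a ∈ A.gr p, ∀ b ∈ A.gr q, M.actR (M.actL a (g i)) b ∈ M.gr (p + q + deg i)) ∧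
    S' ≤ S ⊔ (⨆ i, LinearMap.range (sandwichT M (g i))) ∧
    (∀ (u : Finset I) (c : I → A.V ⊗[k] A.V),
      (∑ i ∈ u, sandwichT M (g i) (c i)) ∈ S → ∀ i ∈ u, c i = 0)

/-- A filtration exhibiting `M` as a cell bimodule. -/
def IsCellFiltration (M : DGBimod A) (Fil : ℕ → Submodule k M.V) : Prop :=
  Fil 0 = ⊥ ∧ Monotone Fil ∧ (⨆ n, Fil n) = ⊤ ∧
  (∀ n, ∀ x ∈ Fil n, M.d x ∈ Fil n) ∧
  (∀ n a, ∀ x ∈ Fil n, M.actL a x ∈ Fil n) ∧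
  (∀ n a, ∀ x ∈ Fil n, M.actR x a ∈ Fil n) ∧
  (∀ n, IsFreeStep M (Fil n) (Fil (n + 1)))

/-- A cell bimodule: admits a filtration with free subquotients. -/
def IsCellBimod (M : DGBimod A) : Prop := ∃ Fil, IsCellFiltration M Fil

/-- A finite cell bimodule: a finite filtration with finite-rank free subquotients. -/
def IsFiniteCellBimod (M : DGBimod A) : Prop :=
  ∃ Fil, (Fil 0 = ⊥ ∧ Monotone Fil ∧ (⨆ n, Fil n) = ⊤ ∧
    (∀ n, ∀ x ∈ Fil n, M.d x ∈ Fil n) ∧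
    (∀ n a, ∀ x ∈ Fil n, M.actL a x ∈ Fil n) ∧
    (∀ n a, ∀ x ∈ Fil n, M.actR x a ∈ Fil n) ∧
    (∀ n, IsFreeStepFin M (Fil n) (Fil (n + 1)))) ∧ (∃ n₀, Fil n₀ = ⊤)

/-- A (finite) cell retract: a subcomplex of a (finite) cell bimodule whose inclusion admits
a bimodule retraction. -/
def IsCellRetract (P : DGBimod A) : Prop :=
  ∃ (C : DGBimod A), IsCellBimod C ∧
    ∃ (ι : P.V →ₗ[k] C.V) (r : C.V →ₗ[k] P.V),
      IsBHom P C 0 ι ∧ IsBHom C P 0 r ∧ Function.Injective ι ∧ r.comp ι = LinearMap.id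

def IsFiniteCellRetract (P : DGBimod A) : Prop :=
  ∃ (C : DGBimod A), IsFiniteCellBimod C ∧
    ∃ (ι : P.V →ₗ[k] C.V) (r : C.V →ₗ[k] P.V),
      IsBHom P C 0 ι ∧ IsBHom C P 0 r ∧ Function.Injective ι ∧ r.comp ι = LinearMap.id

/-- `ρ : R → M` is a resolution: a quasi-isomorphism of dg bimodules from a cell retract. -/
def IsResolution (R M : DGBimod A) (ρ : R.V →ₗ[k] M.V) : Prop :=
  IsCellRetract R ∧ IsBHom R M 0 ρ ∧ IsQIsoDeg R.V M.V R.gr M.gr R.d M.d 0 ρ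

/-- A bimodule is perfect if it admits a resolution by a finite cell retract. -/
def IsPerfect (M : DGBimod A) : Prop :=
  ∃ (R : DGBimod A) (ρ : R.V →ₗ[k] M.V),
    IsFiniteCellRetract R ∧ IsBHom R M 0 ρ ∧ IsQIsoDeg R.V M.V R.gr M.gr R.d M.d 0 ρ

/-- `A` is homologically smooth: perfect as a bimodule over itself. -/
def HomSmooth (A : DGA k) : Prop := IsPerfect A.diag

/-- The homology of the dg algebra `A` in degree `n`. -/
abbrev AlgH (A : DGA k) (n : ℤ) := Hgr A.V A.gr ⊥ A.d n

/-- `A` is homologically proper: its total homology is finitely generated. -/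
def HomProper (A : DGA k) : Prop :=
  (∀ n, Module.Finite k (AlgH A n)) ∧ (Set.Finite {n : ℤ | Nontrivial (AlgH A n)})

/-- A dg bimodule is bounded if it is supported in finitely many gradings. -/
def BoundedBimod (M : DGBimod A) : Prop := ∃ u : Finset ℤ, ∀ i ∉ u, M.gr i = ⊥

/-! ### Bicomplexes and the spectral sequences of their two filtrations -/

/-- A bicomplex of `k`-modules "with relations", presented as one ambient module with a
bigrading by submodules, a horizontal differential `dh` (of bidegree `(-1,0)`), a vertical
differential `dv` (of bidegree `(0,-1)`) and a submodule `N` of relations (so that the actual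
bicomplex is the quotient by `N`; take `N = ⊥` for an honest bicomplex). -/
structure RelBicx (k : Type) [CommRing k] : Type 1 where
  T : Type
  [acg : AddCommGroup T]
  [mod : Module k T]
  gr : ℤ → ℤ → Submodule k T
  N : Submodule k T
  dh : T →ₗ[k] T
  dv : T →ₗ[k] T

attribute [instance] RelBicx.acg RelBicx.mod

namespace RelBicx

variable {k : Type} [CommRing k] (B : RelBicx k)

/-- The total differential. -/
def D : B.T →ₗ[k] B.T := B.dh + B.dv

/-- The column filtration (by the first index `p`) of the total complex, in total degree `n`. -/
def Fcol (p n : ℤ) : Submodule k B.T := ⨆ (i : ℤ) (_ : i ≤ p), B.gr i (n - i)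

/-- The row filtration (by the second index `q`) of the total complex, in total degree `n`. -/
def Frow (q n : ℤ) : Submodule k B.T := ⨆ (j : ℤ) (_ : j ≤ q), B.gr (n - j) j

/-- Approximate cycles for the spectral sequence of the filtration `F`:
elements of filtration `p` (mod `N`) whose total differential drops filtration by `r`. -/
def Zpage (F : ℤ → ℤ → Submodule k B.T) (r p n : ℤ) : Submodule k B.T :=
  (F p n ⊔ B.N) ⊓ Submodule.comap B.D (F (p - r) (n - 1) ⊔ B.N)

/-- The boundaries subobject for the `r`-th page at filtration `p`, total degree `n`. -/
def Bpage (F : ℤ → ℤ → Submodule k B.T) (r p n : ℤ) : Submodule k B.T :=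
  Submodule.map B.D (B.Zpage F (r - 1) (p + r - 1) (n + 1)) ⊔ B.Zpage F (r - 1) (p - 1) n ⊔ B.N

/-- The `r`-th page of the spectral sequence of the filtration `F`, at filtration degree `p`
and total degree `n` (the classical subquotient description `Z^r/B^r`). -/
def Epage (F : ℤ → ℤ → Submodule k B.T) (r p n : ℤ) : Type :=
  ↥(B.Zpage F r p n) ⧸
    Submodule.comap (B.Zpage F r p n).subtype (B.Bpage F r p n)

instance (F : ℤ → ℤ → Submodule k B.T) (r p n : ℤ) : AddCommGroup (B.Epage F r p n) :=
  inferInstanceAs (AddCommGroup (_ ⧸ _))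
instance (F : ℤ → ℤ → Submodule k B.T) (r p n : ℤ) : Module k (B.Epage F r p n) :=
  inferInstanceAs (Module k (_ ⧸ _))

/-- The spectral sequence `ᵛʰE` (filtration by columns; one first takes homology with respect
to the vertical differential). Indexing: `vhE r p q` is `ᵛʰE^r_{p,q}`. -/
def vhE (r p q : ℤ) : Type := B.Epage B.Fcol r p (p + q)

/-- The spectral sequence `ʰᵛE` (filtration by rows; one first takes homology with respect to
the horizontal differential), in the transposed indexing of Lipshitz–Treumann:
`hvE r p q` is `ʰᵛE^r_{p,q}`, whose filtration index is the row `q`. -/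
def hvE (r p q : ℤ) : Type := B.Epage B.Frow r q (p + q)

instance (r p q : ℤ) : AddCommGroup (B.vhE r p q) := inferInstanceAs (AddCommGroup (Epage _ _ _ _ _))
instance (r p q : ℤ) : Module k (B.vhE r p q) := inferInstanceAs (Module k (Epage _ _ _ _ _))
instance (r p q : ℤ) : AddCommGroup (B.hvE r p q) := inferInstanceAs (AddCommGroup (Epage _ _ _ _ _))
instance (r p q : ℤ) : Module k (B.hvE r p q) := inferInstanceAs (Module k (Epage _ _ _ _ _))

/-- Vanishing of the differential leaving the `r`-th page at position `(p, n)`: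
the total differential of any approximate cycle is, up to boundaries of earlier pages and
relations, an approximate cycle of deeper filtration. -/
def zeroDiff (F : ℤ → ℤ → Submodule k B.T) (r p n : ℤ) : Prop :=
  Submodule.map B.D (B.Zpage F r p n) ≤
    Submodule.map B.D (B.Zpage F (r - 1) (p - 1) n) ⊔ B.Zpage F (r - 1) (p - r - 1) (n - 1) ⊔ B.N

/-- The spectral sequence of the filtration `F` collapses at the `r₀`-th page. -/
def collapsesAt (F : ℤ → ℤ → Submodule k B.T) (r₀ : ℤ) : Prop :=
  ∀ r : ℤ, r₀ ≤ r → ∀ p n : ℤ, B.zeroDiff F r p n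

/-- The part of total degree `n` of the bicomplex. -/
def totGr (n : ℤ) : Submodule k B.T := ⨆ p : ℤ, B.gr p (n - p)

/-- The degree-`n` homology of the total complex (of the quotient by `N`). -/
def Htot (n : ℤ) : Type :=
  ↥((B.totGr n ⊔ B.N) ⊓ Submodule.comap B.D B.N) ⧸
    Submodule.comap ((B.totGr n ⊔ B.N) ⊓ Submodule.comap B.D B.N).subtype
      (Submodule.map B.D (B.totGr (n + 1) ⊔ B.N) ⊔ B.N)

instance (n : ℤ) : AddCommGroup (B.Htot n) := inferInstanceAs (AddCommGroup (_ ⧸ _))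
instance (n : ℤ) : Module k (B.Htot n) := inferInstanceAs (Module k (_ ⧸ _))

/-- The graded piece `F_p H_n / F_{p-1} H_n` of the filtration induced by `F` on the homology
of the total complex. -/
def grHtot (F : ℤ → ℤ → Submodule k B.T) (p n : ℤ) : Type :=
  ↥((F p n ⊔ B.N) ⊓ Submodule.comap B.D B.N) ⧸
    Submodule.comap ((F p n ⊔ B.N) ⊓ Submodule.comap B.D B.N).subtype
      (((F (p - 1) n ⊔ B.N) ⊓ Submodule.comap B.D B.N) ⊔
        Submodule.map B.D (B.totGr (n + 1) ⊔ B.N) ⊔ B.N)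

instance (F : ℤ → ℤ → Submodule k B.T) (p n : ℤ) : AddCommGroup (B.grHtot F p n) :=
  inferInstanceAs (AddCommGroup (_ ⧸ _))
instance (F : ℤ → ℤ → Submodule k B.T) (p n : ℤ) : Module k (B.grHtot F p n) :=
  inferInstanceAs (Module k (_ ⧸ _))

/-- The spectral sequence of the filtration `F` converges to the homology of the total
complex: for every position the pages eventually stabilize and agree with the associated
graded of the induced filtration on the homology of the total complex. -/
def convergesTo (F : ℤ → ℤ → Submodule k B.T) : Prop :=
  ∀ p n : ℤ, ∃ r₀ : ℤ, ∀ r : ℤ, r₀ ≤ r →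
    Nonempty (B.Epage F r p n ≃ₗ[k] B.grHtot F p n)

end RelBicx
/-! ### Hochschild chains, the involution `τ`, and the Hochschild–Tate bicomplex (over `𝔽₂`) -/

section Hochschild

variable {A : DGA (ZMod 2)} (R M : DGBimod A)

/-- The ambient space `R ⊗ M` of the Hochschild chain complex `HC(A, M)` (with respect to the
resolution `R` of the diagonal bimodule): `HC(A,M) = (R ⊗ M)/rel2`. -/
abbrev T2 := R.V ⊗[ZMod 2] M.V

/-- The differential `∂(r ⊗ m) = ∂r ⊗ m + r ⊗ ∂m` (char. 2). -/
def d2 : T2 R M →ₗ[ZMod 2] T2 R M :=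
  TensorProduct.map R.d LinearMap.id + TensorProduct.map LinearMap.id M.d

/-- The grading of `R ⊗ M`. -/
def gr2 (n : ℤ) : Submodule (ZMod 2) (T2 R M) :=
  Submodule.span (ZMod 2)
    {z | ∃ i j, ∃ r ∈ R.gr i, ∃ m ∈ M.gr j, i + j = n ∧ z = r ⊗ₜ[ZMod 2] m}

/-- The Hochschild relations `ra ⊗ m ∼ r ⊗ am` and `ar ⊗ m ∼ r ⊗ ma` (char. 2). -/
def rel2 : Submodule (ZMod 2) (T2 R M) :=
  Submodule.span (ZMod 2)
    ({z | ∃ r a m, z = (R.actR r a) ⊗ₜ[ZMod 2] m + r ⊗ₜ[ZMod 2] (M.actL a m)} ∪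
     {z | ∃ r a m, z = (R.actL a r) ⊗ₜ[ZMod 2] m + r ⊗ₜ[ZMod 2] (M.actR m a)})

/-- The underlying space of the Hochschild chain complex `HC(A, M)`. -/
abbrev HCQ := T2 R M ⧸ rel2 R M

/-- The Hochschild homology `HH_n(A, M)` (computed from the chosen resolution `R → A`). -/
abbrev HH (n : ℤ) := Hgr (T2 R M) (gr2 R M) (rel2 R M) (d2 R M) n

/-- The ambient space `R ⊗ (M ⊗ (R ⊗ M))` of the Hochschild chain complex of the derived
tensor product: `HC(A, M ⊗̃_A M) = (R ⊗ (M ⊠ R ⊠ M))/∼ = (R ⊗ M ⊗ R ⊗ M)/rel4`. -/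
abbrev T4 := R.V ⊗[ZMod 2] (M.V ⊗[ZMod 2] (R.V ⊗[ZMod 2] M.V))

/-- The differential of `R ⊗ M ⊗ R ⊗ M` (char. 2; no signs). -/
def d4 : T4 R M →ₗ[ZMod 2] T4 R M :=
  TensorProduct.map R.d LinearMap.id +
  TensorProduct.map LinearMap.id (TensorProduct.map M.d LinearMap.id +
    TensorProduct.map LinearMap.id (TensorProduct.map R.d LinearMap.id +
      TensorProduct.map LinearMap.id M.d))

/-- The grading of `R ⊗ M ⊗ R ⊗ M`. -/
def gr4 (n : ℤ) : Submodule (ZMod 2) (T4 R M) :=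
  Submodule.span (ZMod 2)
    {z | ∃ i₁ j₁ i₂ j₂, ∃ r ∈ R.gr i₁, ∃ m ∈ M.gr j₁, ∃ r' ∈ R.gr i₂, ∃ m' ∈ M.gr j₂,
      i₁ + j₁ + i₂ + j₂ = n ∧ z = r ⊗ₜ[ZMod 2] (m ⊗ₜ[ZMod 2] (r' ⊗ₜ[ZMod 2] m'))}

/-- The combined relations presenting `HC(A, M ⊗̃_A M)` as a quotient of `R ⊗ M ⊗ R ⊗ M`:
the two relations of the naive tensor products `M ⊠_A R ⊠_A M` and the two outer Hochschild
relations (char. 2). -/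
def rel4 : Submodule (ZMod 2) (T4 R M) :=
  Submodule.span (ZMod 2)
    ({z | ∃ r a m r' m', z = (R.actR r a) ⊗ₜ[ZMod 2] (m ⊗ₜ[ZMod 2] (r' ⊗ₜ[ZMod 2] m')) +
        r ⊗ₜ[ZMod 2] ((M.actL a m) ⊗ₜ[ZMod 2] (r' ⊗ₜ[ZMod 2] m'))} ∪
     {z | ∃ r a m r' m', z = (R.actL a r) ⊗ₜ[ZMod 2] (m ⊗ₜ[ZMod 2] (r' ⊗ₜ[ZMod 2] m')) +
        r ⊗ₜ[ZMod 2] (m ⊗ₜ[ZMod 2] (r' ⊗ₜ[ZMod 2] (M.actR m' a)))} ∪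
     {z | ∃ r a m r' m', z = r ⊗ₜ[ZMod 2] ((M.actR m a) ⊗ₜ[ZMod 2] (r' ⊗ₜ[ZMod 2] m')) +
        r ⊗ₜ[ZMod 2] (m ⊗ₜ[ZMod 2] ((R.actL a r') ⊗ₜ[ZMod 2] m'))} ∪
     {z | ∃ r a m r' m', z = r ⊗ₜ[ZMod 2] (m ⊗ₜ[ZMod 2] ((R.actR r' a) ⊗ₜ[ZMod 2] m')) +
        r ⊗ₜ[ZMod 2] (m ⊗ₜ[ZMod 2] (r' ⊗ₜ[ZMod 2] (M.actL a m')))})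


instance {A : DGA (ZMod 2)} (R M : DGBimod A) :
    HasQuotient (T4 R M) (Submodule (ZMod 2) (T4 R M)) := Submodule.hasQuotient

/-- The underlying space of the Hochschild chain complex `HC(A, M ⊗̃_A M)`. -/
abbrev HCQ4 := T4 R M ⧸ rel4 R M

/-- The Hochschild homology `HH_n(A, M ⊗̃_A M)` of the derived tensor square. -/
abbrev HH4 (n : ℤ) := Hgr (T4 R M) (gr4 R M) (rel4 R M) (d4 R M) n

/-- The involution `τ` of `R ⊗ (M ⊗ (R ⊗ M))` exchanging the two halves:
`r ⊗ (m ⊗ (r' ⊗ m')) ↦ r' ⊗ (m' ⊗ (r ⊗ m))`. -/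
def tau4 : T4 R M →ₗ[ZMod 2] T4 R M :=
  ((TensorProduct.assoc (ZMod 2) R.V M.V (R.V ⊗[ZMod 2] M.V)).toLinearMap).comp
    (((TensorProduct.comm (ZMod 2) (R.V ⊗[ZMod 2] M.V) (R.V ⊗[ZMod 2] M.V)).toLinearMap).comp
      ((TensorProduct.assoc (ZMod 2) R.V M.V (R.V ⊗[ZMod 2] M.V)).symm.toLinearMap))

/-- The Hochschild–Tate bicomplex `HC^{Tate}(A, M ⊗̃_A M)`: the `ℤ`-periodic bicomplex whose
columns are the Hochschild complex of `M ⊗̃_A M` and whose horizontal differential is `1 + τ`. -/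
def TateBicx : RelBicx (ZMod 2) where
  T := ℤ →₀ T4 R M
  gr := fun p q => Submodule.map (Finsupp.lsingle p) (gr4 R M q)
  N := ⨅ p : ℤ, Submodule.comap (Finsupp.lapply p) (rel4 R M)
  dv := Finsupp.mapRange.linearMap (d4 R M)
  dh := (Finsupp.lmapDomain (T4 R M) (ZMod 2) (fun p => p - 1)).comp
    (Finsupp.mapRange.linearMap (LinearMap.id + tau4 R M))


/-- An element of the Hochschild–Tate bicomplex concentrated in column `p`. -/
def tateSingle (p : ℤ) (x : T4 R M) : (TateBicx R M).T := Finsupp.single p x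

/-- A dg bimodule `M` is `π`-formal (with respect to the resolution `R` of the diagonal
bimodule) if the spectral sequence `ʰᵛE` of the Hochschild–Tate bicomplex of `M ⊗̃_A M`
collapses at the `E³`-page; equivalently, all the induced operations
`d^{2i} : HH_k(A,M) → HH_{k-i}(A,M)`, `i ≥ 2`, vanish. -/
def PiFormalBimod : Prop := (TateBicx R M).collapsesAt (TateBicx R M).Frow 3

/-- A dg algebra is `π`-formal if every dg bimodule over it is `π`-formal. -/
def PiFormalAlg (R : DGBimod A) : Prop := ∀ M : DGBimod A, PiFormalBimod R M

end Hochschild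


/-- A convergence criterion: the filtered complex is a homotopy retract (with homotopy of bounded
filtration degree) of one whose filtration is bounded in each degree. -/
theorem conv_crit (B : RelBicx k) (F : ℤ → ℤ → Submodule k B.T) (φ H : B.T →ₗ[k] B.T) (s : ℤ)
    (hmono : ∀ p p' n, p ≤ p' → F p n ≤ F p' n)
    (htot : ∀ p n, F p n ≤ B.totGr n)
    (hDN : ∀ x ∈ B.N, B.D x ∈ B.N) (hDD : ∀ x, B.D (B.D x) = 0)
    (hφN : ∀ x ∈ B.N, φ x ∈ B.N) (hHN : ∀ x ∈ B.N, H x ∈ B.N)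
    (hH : ∀ x, x = φ x + B.D (H x) + H (B.D x))
    (hφF : ∀ p n, ∀ x ∈ F p n, φ x ∈ F p n ⊔ B.N)
    (hHF : ∀ p n, ∀ x ∈ F p n, H x ∈ F (p + s) (n + 1) ⊔ B.N)
    (hlow : ∀ n, ∃ a, ∀ p, p ≤ a → ∀ x ∈ F p n, φ x ∈ B.N)
    (hhigh : ∀ n, ∃ b, ∀ x ∈ B.totGr n, φ x ∈ F b n ⊔ B.N) :
    B.convergesTo F := by
  have ext : ∀ (S S' : Submodule k B.T) (f : B.T →ₗ[k] B.T), (∀ x ∈ B.N, f x ∈ B.N) →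
      (∀ x ∈ S, f x ∈ S' ⊔ B.N) → ∀ x ∈ S ⊔ B.N, f x ∈ S' ⊔ B.N := by
    intro S S' f h1 h2 x hx
    obtain ⟨y, hy, z, hz, rfl⟩ := Submodule.mem_sup.1 hx
    rw [map_add]
    exact add_mem (h2 y hy) (Submodule.mem_sup_right (h1 z hz))
  have hmono' : ∀ p p' n, p ≤ p' → F p n ⊔ B.N ≤ F p' n ⊔ B.N :=
    fun p p' n h => sup_le_sup_right (hmono p p' n h) _
  have hφF' := fun p n => ext _ _ φ hφN (hφF p n)
  have hHF' := fun p n => ext _ _ H hHN (hHF p n)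
  have hφD : ∀ x, φ (B.D x) = B.D (φ x) := by
    intro x
    have h1 := hH (B.D x)
    have h2 := congrArg B.D (hH x)
    simp only [map_add, hDD, map_zero, add_zero] at h1 h2
    have := h1.symm.trans h2
    exact add_right_cancel this
  intro p n
  obtain ⟨a, ha⟩ := hlow (n - 1)
  obtain ⟨b, hb⟩ := hhigh (n + 1)
  have ha' : ∀ p, p ≤ a → ∀ x ∈ F p (n-1) ⊔ B.N, φ x ∈ B.N := by
    intro p hp x hx
    have := ext (F p (n-1)) ⊥ φ hφN (fun x hx => Submodule.mem_sup_right (ha p hp x hx)) x hx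
    simpa using this
  have hb' := ext _ _ φ hφN hb
  refine ⟨max (max (p - a) (s + 1)) (b - p + 1) + 1, fun r hr => ?_⟩
  have hr1 : p - r ≤ a := by omega
  have hr2 : s + 1 ≤ r - 1 := by omega
  have hr3 : b ≤ p + r - 1 := by omega
  clear hr
  set Zi : Submodule k B.T := (F p n ⊔ B.N) ⊓ Submodule.comap B.D B.N with hZi
  have hle : Zi ≤ B.Zpage F r p n := by
    rintro x ⟨h1, h2⟩
    exact ⟨h1, Submodule.mem_sup_right h2⟩
  let f : Zi →ₗ[k] B.Epage F r p n :=
    (Submodule.mkQ (Submodule.comap (B.Zpage F r p n).subtype (B.Bpage F r p n))).comp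
      (Submodule.inclusion hle)
  have hsurj : Function.Surjective f := by
    intro y
    obtain ⟨⟨x, hx1, hx2⟩, rfl⟩ := Submodule.mkQ_surjective _ y
    have hx2' : B.D x ∈ F (p - r) (n - 1) ⊔ B.N := hx2
    have hφx : B.D (φ x) ∈ B.N := by
      rw [← hφD]; exact ha' _ hr1 _ hx2
    refine ⟨⟨φ x, hφF' p n x hx1, hφx⟩, ?_⟩
    refine (Submodule.Quotient.eq _).2 ?_
    change φ x - x ∈ B.Bpage F r p n
    rw [← neg_mem_iff, neg_sub]
    have e : x - φ x = B.D (H x) + H (B.D x) := by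
      nth_rewrite 1 [hH x]; abel
    have hHD : H (B.D x) ∈ F (p - 1) n ⊔ B.N := by
      have := hHF' _ _ _ hx2'
      rw [sub_add_cancel] at this
      exact hmono' _ _ _ (by omega) this
    rw [e]
    refine Submodule.mem_sup_left (add_mem (Submodule.mem_sup_left ?_) (Submodule.mem_sup_right ?_))
    · refine ⟨H x, ⟨hmono' _ _ _ (by omega) (hHF' _ _ _ hx1), ?_⟩, rfl⟩
      rw [SetLike.mem_coe, Submodule.mem_comap]
      have e2 : B.D (H x) = x - φ x - H (B.D x) := by rw [e]; abel
      rw [e2, show p + r - 1 - (r - 1) = p by ring, add_sub_cancel_right]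
      exact sub_mem (sub_mem hx1 (hφF' p n x hx1)) (hmono' _ _ _ (by omega) hHD)
    · refine ⟨hHD, ?_⟩
      rw [SetLike.mem_coe, Submodule.mem_comap]
      have e3 : B.D (H (B.D x)) = B.D x - φ (B.D x) := by
        have := hH (B.D x)
        simp only [hDD, map_zero, add_zero] at this
        nth_rewrite 2 [this]; abel
      rw [e3, show p - 1 - (r - 1) = p - r by ring]
      exact sub_mem hx2' (Submodule.mem_sup_right (ha' _ hr1 _ hx2))
  have hker : LinearMap.ker f = Submodule.comap Zi.subtype
      (((F (p - 1) n ⊔ B.N) ⊓ Submodule.comap B.D B.N) ⊔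
        Submodule.map B.D (B.totGr (n + 1) ⊔ B.N) ⊔ B.N) := by
    ext ⟨z, hz1, hz2⟩
    have h1 : (⟨z, hz1, hz2⟩ : Zi) ∈ LinearMap.ker f ↔ z ∈ B.Bpage F r p n := by
      rw [LinearMap.mem_ker]
      exact Submodule.Quotient.mk_eq_zero _
    rw [h1]
    rw [Submodule.mem_comap, Submodule.subtype_apply]
    constructor
    · intro h
      obtain ⟨v, hv, ν, hν, rfl⟩ := Submodule.mem_sup.1 h
      obtain ⟨_, ⟨y, hy, rfl⟩, w, hw, rfl⟩ := Submodule.mem_sup.1 hv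
      refine Submodule.mem_sup_left ?_ |> fun h => add_mem h (Submodule.mem_sup_right hν)
      refine add_mem (Submodule.mem_sup_right ⟨y, ?_, rfl⟩) (Submodule.mem_sup_left ⟨hw.1, ?_⟩)
      · exact sup_le_sup_right (htot _ _) _ hy.1
      · have h3 : B.D (B.D y + w + ν) ∈ B.N := hz2
        rw [map_add, map_add, hDD, zero_add] at h3
        exact (Submodule.add_mem_iff_left _ (hDN ν hν)).1 h3
    · intro h
      obtain ⟨v, hv, ν, hν, rfl⟩ := Submodule.mem_sup.1 h
      obtain ⟨w, hw, _, ⟨y, hy, rfl⟩, rfl⟩ := Submodule.mem_sup.1 hv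
      have hDy : B.D y ∈ F p n ⊔ B.N := by
        have : B.D y = (w + B.D y + ν) - w - ν := by abel
        rw [this]
        exact sub_mem (sub_mem hz1 (hmono' _ _ _ (by omega) hw.1)) (Submodule.mem_sup_right hν)
      refine add_mem (Submodule.mem_sup_left ?_) (Submodule.mem_sup_right hν)
      refine add_mem (Submodule.mem_sup_right ⟨hw.1, Submodule.mem_sup_right hw.2⟩)
        (Submodule.mem_sup_left ?_)
      have e : B.D y = B.D (φ y + H (B.D y)) := by
        nth_rewrite 1 [hH y]
        simp only [map_add, hDD, add_zero]
      refine ⟨φ y + H (B.D y), ⟨?_, ?_⟩, e.symm⟩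
      · exact add_mem (hmono' _ _ _ (by omega) (hb' y hy))
          (hmono' _ _ _ (by omega) (hHF' _ _ _ hDy))
      · rw [SetLike.mem_coe, Submodule.mem_comap, ← e, show p + r - 1 - (r - 1) = p by ring, add_sub_cancel_right]
        exact hDy
  exact ⟨((Submodule.quotEquivOfEq _ _ hker).symm.trans
    (f.quotKerEquivOfSurjective hsurj)).symm⟩

theorem two_self {V : Type} [AddCommGroup V] [Module (ZMod 2) V] (x : V) : x + x = 0 := by
  rw [← two_smul (ZMod 2) x, show (2 : ZMod 2) = 0 from rfl, zero_smul]

theorem one_smul_inj {V : Type} [AddCommGroup V] [Module (ZMod 2) V] {x y : V}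
    (h : (1 : ZMod 2) • x = (1 : ZMod 2) • y) : x = y := by simpa using h

theorem two_eq {V : Type} [AddCommGroup V] [Module (ZMod 2) V] {x y : V} (h : x + y = 0) :
    x = y := by
  rw [eq_neg_of_add_eq_zero_left h]
  exact neg_eq_of_add_eq_zero_left (two_self y)

theorem two_neg {V : Type} [AddCommGroup V] [Module (ZMod 2) V] (x : V) : -x = x :=
  neg_eq_of_add_eq_zero_left (two_self x)

theorem two_sign {V : Type} [AddCommGroup V] [Module (ZMod 2) V] (i : ℤ) (x : V) :
    (Int.negOnePow i : ℤ) • x = x := by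
  rcases Int.even_or_odd i with h | h
  · rw [Int.negOnePow_even i h]; simp
  · rw [Int.negOnePow_odd i h]; simp [two_neg]

theorem DGA.mem_top {A : DGA k} (a : A.V) : a ∈ ⨆ i, A.gr i := by
  rw [A.internal.submodule_iSup_eq_top]; trivial

theorem DGBimod.mem_top {A : DGA k} (P : DGBimod A) (a : P.V) : a ∈ ⨆ i, P.gr i := by
  rw [P.internal.submodule_iSup_eq_top]; trivial

section cells
variable {A : DGA (ZMod 2)}

theorem d_actL (P : DGBimod A) (a : A.V) (m : P.V) :
    P.d (P.actL a m) = P.actL (A.d a) m + P.actL a (P.d m) := by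
  refine Submodule.iSup_induction A.gr (motive := fun a =>
    P.d (P.actL a m) = P.actL (A.d a) m + P.actL a (P.d m)) (DGA.mem_top a) ?_ ?_ ?_
  · intro i a ha
    rw [P.leibnizL i a ha, two_sign]
  · simp
  · intro x y hx hy
    simp only [map_add, LinearMap.add_apply, hx, hy]; abel

theorem d_actR (P : DGBimod A) (m : P.V) (a : A.V) :
    P.d (P.actR m a) = P.actR (P.d m) a + P.actR m (A.d a) := by
  refine Submodule.iSup_induction P.gr (motive := fun m =>
    P.d (P.actR m a) = P.actR (P.d m) a + P.actR m (A.d a)) (P.mem_top m) ?_ ?_ ?_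
  · intro i m hm
    rw [P.leibnizR i m hm, two_sign]
  · simp
  · intro x y hx hy
    simp only [map_add, LinearMap.add_apply, hx, hy]; abel

theorem sandwichT_tmul (P : DGBimod A) (m : P.V) (a b : A.V) :
    sandwichT P m (a ⊗ₜ[ZMod 2] b) = P.actR (P.actL a m) b := by
  simp [sandwichT, sandwich]

/-- homogeneous spanning -/
theorem homog_span (P : DGBimod A) {G : Type} (g : G → P.V) (deg : G → ℤ)
    (hg : ∀ x, g x ∈ P.gr (deg x)) (htop : ∀ v, v ∈ ⨆ x, LinearMap.range (sandwichT P (g x)))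
    (m : ℤ) : P.gr m ≤ Submodule.span (ZMod 2) {z | ∃ x p q, ∃ a ∈ A.gr p, ∃ b ∈ A.gr q,
      p + deg x + q = m ∧ z = P.actR (P.actL a (g x)) b} := by
  set Q : ℤ → Submodule (ZMod 2) P.V := fun m =>
    Submodule.span (ZMod 2) {z | ∃ x p q, ∃ a ∈ A.gr p, ∃ b ∈ A.gr q,
      p + deg x + q = m ∧ z = P.actR (P.actL a (g x)) b} with hQ
  change P.gr m ≤ Q m
  have hle : ∀ m, Q m ≤ P.gr m := by
    intro m
    refine Submodule.span_le.2 ?_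
    rintro _ ⟨x, p, q, a, ha, b, hb, rfl, rfl⟩
    exact P.actR_gr _ _ _ (P.actL_gr _ _ _ ha _ (hg x)) _ hb
  have htopQ : (⨆ m, Q m) = ⊤ := by
    refine eq_top_iff.2 fun v _ => ?_
    refine (iSup_le (fun x => ?_) : (⨆ x, LinearMap.range (sandwichT P (g x))) ≤ _) (htop v)
    rintro _ ⟨t, rfl⟩
    induction t using TensorProduct.induction_on with
    | zero => simp
    | add s t hs ht => rw [map_add]; exact add_mem hs ht
    | tmul a b =>
      rw [sandwichT_tmul]
      refine Submodule.iSup_induction A.gr (motive := fun a =>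
        P.actR (P.actL a (g x)) b ∈ ⨆ m, Q m) (DGA.mem_top a) ?_ ?_ ?_
      · intro p a ha
        refine Submodule.iSup_induction A.gr (motive := fun b =>
          P.actR (P.actL a (g x)) b ∈ ⨆ m, Q m) (DGA.mem_top b) ?_ ?_ ?_
        · intro q b hb
          exact Submodule.mem_iSup_of_mem (p + deg x + q)
            (Submodule.subset_span ⟨x, p, q, a, ha, b, hb, rfl, rfl⟩)
        · simp
        · intro y z hy hz
          rw [map_add]; exact add_mem hy hz
      · simp
      · intro y z hy hz
        simp only [map_add, LinearMap.add_apply]; exact add_mem hy hz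
  have hind := P.internal.submodule_iSupIndep m
  have hdis : (⨆ j, ⨆ (_ : j ≠ m), Q j) ⊓ P.gr m = ⊥ := by
    refine le_bot_iff.1 (le_trans ?_ (le_of_eq hind.symm.eq_bot))
    exact inf_le_inf_right _ (iSup_mono fun j => iSup_mono fun _ => hle j)
  have : Q m ⊔ (⨆ j, ⨆ (_ : j ≠ m), Q j) = ⊤ := by
    refine eq_top_iff.2 (htopQ ▸ iSup_le fun j => ?_)
    by_cases h : j = m
    · subst h; exact le_sup_left
    · exact le_sup_of_le_right (le_iSup₂_of_le j h le_rfl)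
  have h2 := sup_inf_assoc_of_le (⨆ j, ⨆ (_ : j ≠ m), Q j) (hle m)
  rw [this, hdis, top_inf_eq, sup_bot_eq] at h2
  exact h2.le

/-- Explicit cell data. -/
structure CD (C : DGBimod A) where
  Fil : ℕ → Submodule (ZMod 2) C.V
  fil0 : Fil 0 = ⊥
  mono : Monotone Fil
  top : (⨆ n, Fil n) = ⊤
  hd : ∀ n, ∀ x ∈ Fil n, C.d x ∈ Fil n
  hL : ∀ n a, ∀ x ∈ Fil n, C.actL a x ∈ Fil n
  hR : ∀ n a, ∀ x ∈ Fil n, C.actR x a ∈ Fil n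
  I : ℕ → Type
  g : ∀ n, I n → C.V
  deg : ∀ n, I n → ℤ
  g_mem : ∀ n i, g n i ∈ Fil (n + 1)
  dg_mem : ∀ n i, C.d (g n i) ∈ Fil n
  g_gr : ∀ n i, g n i ∈ C.gr (deg n i)
  gen : ∀ n, Fil (n + 1) ≤ Fil n ⊔ (⨆ i, LinearMap.range (sandwichT C (g n i)))
  free : ∀ n (u : Finset (I n)) (c : I n → A.V ⊗[ZMod 2] A.V),
      (∑ i ∈ u, sandwichT C (g n i) (c i)) ∈ Fil n → ∀ i ∈ u, c i = 0

theorem cell_CD (C : DGBimod A) (h : IsCellBimod C) : Nonempty (CD C) := by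
  obtain ⟨Fil, h0, hm, ht, hd, hL, hR, hs⟩ := h
  choose I g deg h1 h2 h3 h4 h5 using hs
  refine ⟨⟨Fil, h0, hm, ht, hd, hL, hR, I, g, deg, h1, h2, fun n i => ?_, h4, h5⟩⟩
  have := h3 n i 0 0 _ A.one_gr _ A.one_gr
  simpa [C.actL_one, C.actR_one] using this

theorem fincell_CD (C : DGBimod A) (h : IsFiniteCellBimod C) :
    ∃ D : CD C, (∀ n, Finite (D.I n)) ∧ ∃ n₀, D.Fil n₀ = ⊤ := by
  obtain ⟨Fil, ⟨h0, hm, ht, hd, hL, hR, hs⟩, hn⟩ := h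
  choose I hI g deg h1 h2 h3 h4 h5 using hs
  refine ⟨⟨Fil, h0, hm, ht, hd, hL, hR, I, g, deg, h1, h2, fun n i => ?_, h4, h5⟩, hI, hn⟩
  have := h3 n i 0 0 _ A.one_gr _ A.one_gr
  simpa [C.actL_one, C.actR_one] using this

theorem fincell_cell (C : DGBimod A) (h : IsFiniteCellBimod C) : IsCellBimod C := by
  obtain ⟨Fil, ⟨h0, hm, ht, hd, hL, hR, hs⟩, hn⟩ := h
  refine ⟨Fil, h0, hm, ht, hd, hL, hR, fun n => ?_⟩
  obtain ⟨I, _, h⟩ := hs n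
  exact ⟨I, h⟩

namespace CD
variable {C : DGBimod A} (D : CD C)

abbrev G := Σ n, D.I n

def gg (x : D.G) : C.V := D.g x.1 x.2

theorem fil_le (n : ℕ) : D.Fil n ≤ ⨆ x : {x : D.G // x.1 < n}, LinearMap.range (sandwichT C (D.gg x)) := by
  induction n with
  | zero => rw [D.fil0]; exact bot_le
  | succ n ih =>
    refine (D.gen n).trans (sup_le (ih.trans ?_) ?_)
    · refine iSup_le fun x => ?_
      exact le_iSup (fun x : {x : D.G // x.1 < n + 1} => LinearMap.range (sandwichT C (D.gg x)))
        ⟨x.1, x.2.trans (Nat.lt_succ_self n)⟩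
    · refine iSup_le fun i => ?_
      exact le_iSup (fun x : {x : D.G // x.1 < n + 1} => LinearMap.range (sandwichT C (D.gg x)))
        ⟨⟨n, i⟩, Nat.lt_succ_self n⟩

theorem mem_fil (v : C.V) : ∃ n, v ∈ D.Fil n := by
  have : v ∈ ⨆ n, D.Fil n := by rw [D.top]; trivial
  exact (Submodule.mem_iSup_of_directed _ D.mono.directed_le).1 this

theorem spans (v : C.V) : v ∈ ⨆ x, LinearMap.range (sandwichT C (D.gg x)) := by
  obtain ⟨n, hn⟩ := D.mem_fil v
  have h : (⨆ x : {x : D.G // x.1 < n}, LinearMap.range (sandwichT C (D.gg x.1))) ≤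
      ⨆ x : D.G, LinearMap.range (sandwichT C (D.gg x)) :=
    iSup_le fun x => le_iSup (fun x : D.G => LinearMap.range (sandwichT C (D.gg x))) x.1
  exact h (D.fil_le n hn)

theorem fil_ind (n : ℕ) {p : C.V → Prop} (h0 : p 0) (hadd : ∀ x y, p x → p y → p (x + y))
    (hg : ∀ (x : D.G), x.1 < n → ∀ a b, p (C.actR (C.actL a (D.gg x)) b)) :
    ∀ v ∈ D.Fil n, p v := by
  intro v hv
  refine Submodule.iSup_induction _ (motive := p) (D.fil_le n hv) ?_ h0 hadd
  rintro x _ ⟨t, rfl⟩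
  induction t using TensorProduct.induction_on with
  | zero => simpa using h0
  | add s t hs ht => rw [map_add]; exact hadd _ _ hs ht
  | tmul a b => rw [sandwichT_tmul]; exact hg x.1 x.2 a b

theorem ind {p : C.V → Prop} (h0 : p 0) (hadd : ∀ x y, p x → p y → p (x + y))
    (hg : ∀ (x : D.G), ∀ a b, p (C.actR (C.actL a (D.gg x)) b)) (v : C.V) : p v := by
  obtain ⟨n, hn⟩ := D.mem_fil v
  exact D.fil_ind n h0 hadd (fun x _ => hg x) v hn

def Phi : (D.G →₀ A.V ⊗[ZMod 2] A.V) →ₗ[ZMod 2] C.V :=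
  Finsupp.lsum (ZMod 2) (fun x => sandwichT C (D.gg x))

theorem Phi_single (x : D.G) (t) : D.Phi (Finsupp.single x t) = sandwichT C (D.gg x) t := by
  simp [Phi]

theorem Phi_surj : Function.Surjective D.Phi := by
  rw [← LinearMap.range_eq_top, eq_top_iff]
  intro v _
  refine (iSup_le fun x => ?_ : _ ≤ LinearMap.range D.Phi) (D.spans v)
  rintro _ ⟨t, rfl⟩
  exact ⟨Finsupp.single x t, D.Phi_single x t⟩

theorem sand_mem (x : D.G) (n : ℕ) (h : x.1 < n) (t) : sandwichT C (D.gg x) t ∈ D.Fil n := by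
  have hx : D.gg x ∈ D.Fil n := D.mono (Nat.succ_le_of_lt h) (D.g_mem x.1 x.2)
  induction t using TensorProduct.induction_on with
  | zero => simp
  | add s t hs ht => rw [map_add]; exact add_mem hs ht
  | tmul a b => rw [sandwichT_tmul]; exact D.hR _ _ _ (D.hL _ _ _ hx)

theorem Phi_inj_aux (n : ℕ) (c : D.G →₀ A.V ⊗[ZMod 2] A.V) (hc : ∀ x, n ≤ x.1 → c x = 0)
    (h0 : D.Phi c = 0) : c = 0 := by
  classical
  induction n with
  | zero => ext1 x; exact hc x (Nat.zero_le _)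
  | succ n ih =>
    refine ih fun x hx => ?_
    rcases hx.lt_or_eq with h | h
    · exact hc x h
    obtain ⟨m, i⟩ := x
    obtain rfl : n = m := h
    by_contra hne
    have hsum : D.Phi c = ∑ x ∈ c.support, sandwichT C (D.gg x) (c x) := by
      rw [Phi, Finsupp.lsum_apply, Finsupp.sum]
    rw [h0, ← Finset.sum_filter_add_sum_filter_not c.support (fun x : D.G => x.1 = n)] at hsum
    have hlow : ∑ x ∈ c.support with ¬ x.1 = n, sandwichT C (D.gg x) (c x) ∈ D.Fil n := by
      refine sum_mem fun x hx => D.sand_mem x n ?_ _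
      rw [Finset.mem_filter, Finsupp.mem_support_iff] at hx
      by_contra h
      exact hx.1 (hc x (by have := hx.2; omega))
    have hhi : ∑ x ∈ c.support with x.1 = n, sandwichT C (D.gg x) (c x) ∈ D.Fil n := by
      rw [eq_neg_of_add_eq_zero_left hsum.symm]; exact neg_mem hlow
    obtain ⟨u, hu⟩ : ∃ u : Finset (D.I n), ∀ i, i ∈ u ↔ (⟨n, i⟩ : D.G) ∈ c.support := by
      have hinj : Set.InjOn (fun i : D.I n => (⟨n, i⟩ : D.G))
          ((fun i : D.I n => (⟨n, i⟩ : D.G)) ⁻¹' ↑c.support) := by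
        intro a _ b _ h; simpa using h
      exact ⟨c.support.preimage _ hinj, fun i => Finset.mem_preimage⟩
    have hus : ∑ x ∈ c.support with x.1 = n, sandwichT C (D.gg x) (c x)
        = ∑ i ∈ u, sandwichT C (D.g n i) (c ⟨n, i⟩) := by
      symm
      refine Finset.sum_bij (fun i _ => (⟨n, i⟩ : D.G)) ?_ ?_ ?_ ?_
      · intro i hi
        rw [hu] at hi
        exact Finset.mem_filter.2 ⟨hi, rfl⟩
      · intro a _ b _ h; simpa using h
      · rintro ⟨m, j⟩ hx
        obtain ⟨hx1, hx2⟩ := Finset.mem_filter.1 hx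
        have hmn : m = n := hx2
        subst hmn
        exact ⟨j, by rw [hu]; exact hx1, rfl⟩
      · intro i _; rfl
    rw [hus] at hhi
    refine hne (D.free n u (fun i => c ⟨n, i⟩) hhi i ?_)
    rw [hu]
    exact Finsupp.mem_support_iff.2 hne

theorem Phi_inj : Function.Injective D.Phi := by
  rw [injective_iff_map_eq_zero]
  intro c hc
  refine D.Phi_inj_aux (c.support.sup (fun x => x.1 + 1)) c (fun x hx => ?_) hc
  by_contra h
  have := Finset.le_sup (f := fun x : D.G => x.1 + 1) (Finsupp.mem_support_iff.2 h)
  have h2 : x.1 + 1 ≤ c.support.sup (fun x => x.1 + 1) := this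
  omega

theorem exists_map (n : ℕ) (W : DGBimod A) (s : ℤ) (w : D.I n → W.V)
    (hw : ∀ i, w i ∈ W.gr (D.deg n i + s)) :
    ∃ f ∈ grHomSub C W s, (∀ x ∈ D.Fil n, f x = 0) ∧ ∀ i, f (D.g n i) = w i := by
  classical
  let w' : D.G → W.V := fun x => if h : x.1 = n then w (h ▸ x.2) else 0
  have hw' : ∀ x, w' x ∈ W.gr (D.deg x.1 x.2 + s) := by
    rintro ⟨m, i⟩
    by_cases h : m = n
    · subst h; simpa [w'] using hw i
    · simp [w', h]
  let e := LinearEquiv.ofBijective D.Phi ⟨D.Phi_inj, D.Phi_surj⟩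
  let f : C.V →ₗ[ZMod 2] W.V :=
    (Finsupp.lsum (ZMod 2) (fun x => sandwichT W (w' x))).comp e.symm.toLinearMap
  have hf : ∀ x a b, f (C.actR (C.actL a (D.gg x)) b) = W.actR (W.actL a (w' x)) b := by
    intro x a b
    have : C.actR (C.actL a (D.gg x)) b = e (Finsupp.single x (a ⊗ₜ b)) := by
      rw [← sandwichT_tmul, ← D.Phi_single]; rfl
    rw [this]
    simp only [f, LinearMap.comp_apply, LinearEquiv.coe_coe, LinearEquiv.symm_apply_apply]
    simp [sandwichT_tmul]
  refine ⟨f, ⟨?_, ?_, ?_⟩, ?_, ?_⟩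
  · intro i x hx
    have := homog_span C D.gg (fun x => D.deg x.1 x.2) (fun x => D.g_gr _ _) D.spans i hx
    refine (Submodule.span_le.2 ?_ : _ ≤ Submodule.comap f (W.gr (i + s))) this
    rintro _ ⟨y, p, q, a, ha, b, hb, rfl, rfl⟩
    rw [SetLike.mem_coe, Submodule.mem_comap, hf]
    have := W.actR_gr _ _ _ (W.actL_gr _ _ _ ha _ (hw' y)) _ hb
    convert this using 2
    ring
  · intro a m
    refine D.ind (p := fun m => f (C.actL a m) = W.actL a (f m)) (by simp) ?_ ?_ m
    · intro x y hx hy; simp [hx, hy]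
    · intro x b c
      rw [← C.actLR, ← C.actL_mul, hf, hf, W.actL_mul, W.actLR]
  · intro m a
    refine D.ind (p := fun m => f (C.actR m a) = W.actR (f m) a) (by simp) ?_ ?_ m
    · intro x y hx hy; simp [hx, hy]
    · intro x b c
      rw [C.actR_mul, hf, hf, W.actR_mul]
  · refine D.fil_ind n (by simp) ?_ ?_
    · intro x y hx hy; simp [hx, hy]
    · intro x hx a b
      rw [hf]
      have : w' x = 0 := by simp [w', hx.ne]
      simp [this]
  · intro i
    have := hf ⟨n, i⟩ A.one A.one
    rw [C.actL_one, C.actR_one, W.actL_one, W.actR_one] at this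
    refine this.trans ?_
    simp [w']

theorem exists_lim {W : Type} [AddCommGroup W] [Module (ZMod 2) W]
    (f : ℕ → C.V →ₗ[ZMod 2] W) (hf : ∀ n, ∀ x ∈ D.Fil n, f (n + 1) x = f n x) :
    ∃ F : C.V →ₗ[ZMod 2] W, ∀ n, ∀ x ∈ D.Fil n, F x = f n x := by
  have hle : ∀ n m, n ≤ m → ∀ x ∈ D.Fil n, f m x = f n x := by
    intro n m h x hx
    induction m, h using Nat.le_induction with
    | base => rfl
    | succ m hm ih => rw [hf m x (D.mono hm hx), ih]
  choose N hN using D.mem_fil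
  have key : ∀ n, ∀ x ∈ D.Fil n, f (N x) x = f n x := by
    intro n x hx
    rw [← hle _ _ (le_max_left n (N x)) x hx, ← hle _ _ (le_max_right n (N x)) x (hN x)]
  refine ⟨{ toFun := fun x => f (N x) x, map_add' := ?_, map_smul' := ?_ }, key⟩
  · intro x y
    have hx := D.mono (le_max_left (N x) (N y)) (hN x)
    have hy := D.mono (le_max_right (N x) (N y)) (hN y)
    rw [key _ _ (add_mem hx hy), map_add, key _ _ hx, key _ _ hy]
  · intro c x
    rw [key _ _ (Submodule.smul_mem _ c (hN x)), map_smul]; rfl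

end CD
end cells

section lifting
variable {A : DGA (ZMod 2)}

theorem acyc {X Y : DGBimod A} {ρ : X.V →ₗ[ZMod 2] Y.V} (hρ : IsBHom X Y 0 ρ)
    (hq : IsQIsoDeg X.V Y.V X.gr Y.gr X.d Y.d 0 ρ) (m : ℤ) (u : X.V) (v : Y.V)
    (hu : u ∈ X.gr m) (hv : v ∈ Y.gr (m + 1)) (hdu : X.d u = 0) (hdv : Y.d v = ρ u) :
    ∃ x ∈ X.gr (m + 1), ∃ y ∈ Y.gr (m + 2), u + X.d x = 0 ∧ v + ρ x + Y.d y = 0 := by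
  obtain ⟨x, hx, hxu⟩ := (hq m).2 u hu hdu ⟨v, by simpa using hv, hdv⟩
  have hρx : ρ x ∈ Y.gr (m + 1) := by simpa using hρ.1 _ x hx
  obtain ⟨x₂, hx₂, hdx₂, y, hy, hyy⟩ := (hq (m + 1)).1 (v + ρ x)
    (by simpa using add_mem hv hρx)
    (by rw [map_add, ← hρ.2.1, hxu, hdv, two_self])
  refine ⟨x + x₂, add_mem hx hx₂, y, ?_, ?_, ?_⟩
  · have e : m + 1 + 0 + 1 = m + 2 := by ring
    rw [← e]; exact hy
  · rw [map_add, hxu, hdx₂, add_zero, two_self]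
  · rw [hyy, map_add]
    have : v + (ρ x + ρ x₂) + (ρ x₂ - (v + ρ x)) = ρ x₂ + ρ x₂ := by abel
    rw [this, two_self]

/-- The boundary of a graded bimodule map commutes with the actions. -/
theorem bdL {X Y : DGBimod A} {s : ℤ} {f : X.V →ₗ[ZMod 2] Y.V} (hf : f ∈ grHomSub X Y s)
    (a : A.V) (m : X.V) :
    Y.d (f (X.actL a m)) + f (X.d (X.actL a m)) = Y.actL a (Y.d (f m) + f (X.d m)) := by
  rw [hf.2.1, d_actL, d_actL, map_add, hf.2.1, hf.2.1, map_add]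
  have : Y.actL (A.d a) (f m) + Y.actL a (Y.d (f m)) +
      (Y.actL (A.d a) (f m) + Y.actL a (f (X.d m))) =
      (Y.actL (A.d a) (f m) + Y.actL (A.d a) (f m)) +
      (Y.actL a (Y.d (f m)) + Y.actL a (f (X.d m))) := by abel
  rw [this, two_self, zero_add]

theorem bdR {X Y : DGBimod A} {s : ℤ} {f : X.V →ₗ[ZMod 2] Y.V} (hf : f ∈ grHomSub X Y s)
    (m : X.V) (a : A.V) :
    Y.d (f (X.actR m a)) + f (X.d (X.actR m a)) = Y.actR (Y.d (f m) + f (X.d m)) a := by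
  rw [hf.2.2, d_actR, d_actR, map_add, hf.2.2, hf.2.2, map_add, LinearMap.add_apply]
  have : Y.actR (Y.d (f m)) a + Y.actR (f m) (A.d a) +
      (Y.actR (f (X.d m)) a + Y.actR (f m) (A.d a)) =
      (Y.actR (f m) (A.d a) + Y.actR (f m) (A.d a)) +
      (Y.actR (Y.d (f m)) a + Y.actR (f (X.d m)) a) := by abel
  rw [this, two_self, zero_add]

/-- A map compatible with actions vanishing on `Fil n` and level `n` generators vanishes on
`Fil (n+1)`. -/
theorem CD.vanish_step {C W : DGBimod A} (D : CD C) (n : ℕ) (f : C.V →ₗ[ZMod 2] W.V)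
    (hL : ∀ a m, f (C.actL a m) = W.actL a (f m)) (hR : ∀ m a, f (C.actR m a) = W.actR (f m) a)
    (h1 : ∀ x ∈ D.Fil n, f x = 0) (h2 : ∀ i, f (D.g n i) = 0) :
    ∀ x ∈ D.Fil (n + 1), f x = 0 := by
  intro x hx
  have : D.Fil (n + 1) ≤ LinearMap.ker f := by
    refine (D.gen n).trans (sup_le h1 (iSup_le fun i => ?_))
    rintro _ ⟨t, rfl⟩
    rw [LinearMap.mem_ker]
    induction t using TensorProduct.induction_on with
    | zero => simp
    | add s t hs ht => rw [map_add, map_add, hs, ht, add_zero]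
    | tmul a b => rw [sandwichT_tmul, hR, hL, h2]; simp
  exact this hx

/-- Maps from a cell bimodule to the cone of a quasi-isomorphism are null-homotopic. -/
theorem lift_cell {C X Y : DGBimod A} (D : CD C) {ρ : X.V →ₗ[ZMod 2] Y.V} (hρ : IsBHom X Y 0 ρ)
    (hq : IsQIsoDeg X.V Y.V X.gr Y.gr X.d Y.d 0 ρ) (s : ℤ)
    (u : C.V →ₗ[ZMod 2] X.V) (v : C.V →ₗ[ZMod 2] Y.V)
    (hu : u ∈ grHomSub C X s) (hv : v ∈ grHomSub C Y (s + 1))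
    (hdu : ∀ x, u (C.d x) = X.d (u x)) (hdv : ∀ x, Y.d (v x) + v (C.d x) = ρ (u x)) :
    ∃ f ∈ grHomSub C X (s + 1), ∃ h ∈ grHomSub C Y (s + 2),
      (∀ x, u x + (X.d (f x) + f (C.d x)) = 0) ∧
      (∀ x, v x + ρ (f x) + (Y.d (h x) + h (C.d x)) = 0) := by
  let Good : ℕ → (C.V →ₗ[ZMod 2] X.V) × (C.V →ₗ[ZMod 2] Y.V) → Prop := fun n p =>
    p.1 ∈ grHomSub C X (s + 1) ∧ p.2 ∈ grHomSub C Y (s + 2) ∧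
    (∀ x ∈ D.Fil n, u x + (X.d (p.1 x) + p.1 (C.d x)) = 0) ∧
    (∀ x ∈ D.Fil n, v x + ρ (p.1 x) + (Y.d (p.2 x) + p.2 (C.d x)) = 0)
  have step : ∀ n (p : {p // Good n p}), ∃ q : {q // Good (n + 1) q},
      (∀ x ∈ D.Fil n, q.1.1 x = p.1.1 x) ∧ (∀ x ∈ D.Fil n, q.1.2 x = p.1.2 x) := by
    rintro n ⟨⟨f, h⟩, hf, hh, e1, e2⟩
    simp only at hf hh e1 e2
    have hex : ∀ i, ∃ x ∈ X.gr (D.deg n i + s + 1), ∃ y ∈ Y.gr (D.deg n i + s + 2),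
        (u (D.g n i) + (X.d (f (D.g n i)) + f (C.d (D.g n i)))) + X.d x = 0 ∧
        (v (D.g n i) + ρ (f (D.g n i)) + (Y.d (h (D.g n i)) + h (C.d (D.g n i)))) + ρ x
          + Y.d y = 0 := by
      intro i
      have hg := D.g_gr n i
      have hdg := C.d_gr _ _ hg
      have E1 := e1 _ (D.dg_mem n i)
      have E2 := e2 _ (D.dg_mem n i)
      rw [C.d_d, map_zero, add_zero] at E1 E2
      have a1 := hu.1 _ _ hg
      have a2 := hf.1 _ _ hg
      have a3 := hf.1 _ _ hdg
      have a4 := hv.1 _ _ hg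
      have a5 := hh.1 _ _ hg
      have a6 := hh.1 _ _ hdg
      have a7 := hρ.1 _ _ a2
      have a8 := X.d_gr _ _ a2
      have a9 := Y.d_gr _ _ a5
      refine acyc hρ hq (D.deg n i + s) _ _ ?_ ?_ ?_ ?_
      · refine add_mem a1 (add_mem ?_ ?_)
        · convert a8 using 2; ring
        · convert a3 using 2; ring
      · refine add_mem (add_mem ?_ ?_) (add_mem ?_ ?_)
        · convert a4 using 2; ring
        · convert a7 using 2; ring
        · convert a9 using 2; ring
        · convert a6 using 2; ring
      · rw [map_add, map_add, X.d_d, zero_add, ← hdu]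
        exact E1
      · simp only [map_add, Y.d_d, zero_add, ← hρ.2.1]
        simp only [hρ.2.1, ← hdv] at E2 ⊢
        rw [← sub_eq_zero, ← E2]
        refine one_smul_inj ?_
        match_scalars <;> decide
    choose x hx y hy ex ey using hex
    obtain ⟨f₀, hf₀, hf₀F, hf₀g⟩ := D.exists_map n X (s + 1) x
      (fun i => by rw [← add_assoc]; exact hx i)
    obtain ⟨h₀, hh₀, hh₀F, hh₀g⟩ := D.exists_map n Y (s + 2) y
      (fun i => by rw [← add_assoc]; exact hy i)
    have hF := add_mem hf hf₀
    have hH := add_mem hh hh₀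
    refine ⟨⟨⟨f + f₀, h + h₀⟩, hF, hH, ?_, ?_⟩, ?_, ?_⟩
    · refine D.vanish_step (W := X) n
        (u + (X.d ∘ₗ (f + f₀) + (f + f₀) ∘ₗ C.d)) ?_ ?_ ?_ ?_
      · intro a m
        have := bdL hF a m
        simp only [LinearMap.add_apply, LinearMap.comp_apply] at this ⊢
        rw [this, hu.2.1, ← map_add]
      · intro m a
        have := bdR hF m a
        simp only [LinearMap.add_apply, LinearMap.comp_apply] at this ⊢
        rw [this, hu.2.2, ← LinearMap.add_apply, ← map_add]
      · intro z hz
        have := e1 z hz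
        simp only [LinearMap.add_apply, LinearMap.comp_apply, hf₀F z hz, hf₀F _ (D.hd _ _ hz),
          add_zero]
        exact this
      · intro i
        have := ex i
        simp only [LinearMap.add_apply, LinearMap.comp_apply, hf₀g, hf₀F _ (D.dg_mem n i),
          add_zero, map_add]
        rw [← this]; abel
    · refine D.vanish_step (W := Y) n
        (v + ρ ∘ₗ (f + f₀) + (Y.d ∘ₗ (h + h₀) + (h + h₀) ∘ₗ C.d)) ?_ ?_ ?_ ?_
      · intro a m
        have := bdL hH a m
        have h3 := hF.2.1 a m
        simp only [LinearMap.add_apply, LinearMap.comp_apply] at this h3 ⊢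
        rw [this, h3, hv.2.1, hρ.2.2.1, ← map_add, ← map_add]
      · intro m a
        have := bdR hH m a
        have h3 := hF.2.2 m a
        simp only [LinearMap.add_apply, LinearMap.comp_apply] at this h3 ⊢
        rw [this, h3, hv.2.2, hρ.2.2.2, ← LinearMap.add_apply, ← map_add, ← LinearMap.add_apply,
          ← map_add]
      · intro z hz
        have := e2 z hz
        simp only [LinearMap.add_apply, LinearMap.comp_apply, hf₀F z hz, hh₀F z hz,
          hh₀F _ (D.hd _ _ hz), add_zero]
        exact this
      · intro i
        have := ey i
        simp only [LinearMap.add_apply, LinearMap.comp_apply, hf₀g, hh₀g, hh₀F _ (D.dg_mem n i),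
          add_zero, map_add]
        rw [← this]; abel
    · intro z hz; simp [hf₀F z hz]
    · intro z hz; simp [hh₀F z hz]
  choose next hn1 hn2 using step
  have good0 : Good 0 (0, 0) := by
    refine ⟨zero_mem _, zero_mem _, ?_, ?_⟩ <;>
    · intro x hx
      rw [D.fil0, Submodule.mem_bot] at hx
      simp [hx]
  let seq : ∀ n, {p // Good n p} := fun n => Nat.rec ⟨(0, 0), good0⟩ (fun n p => next n p) n
  have hseq : ∀ n, seq (n + 1) = next n (seq n) := fun n => rfl
  obtain ⟨f, hf⟩ := D.exists_lim (fun n => (seq n).1.1)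
    (fun n x hx => by simp only [hseq]; exact hn1 n (seq n) x hx)
  obtain ⟨h, hh⟩ := D.exists_lim (fun n => (seq n).1.2)
    (fun n x hx => by simp only [hseq]; exact hn2 n (seq n) x hx)
  refine ⟨f, ⟨?_, ?_, ?_⟩, h, ⟨?_, ?_, ?_⟩, ?_, ?_⟩
  · intro i x hx
    obtain ⟨n, hn⟩ := D.mem_fil x
    rw [hf n x hn]; exact (seq n).2.1.1 i x hx
  · intro a x
    obtain ⟨n, hn⟩ := D.mem_fil x
    rw [hf n x hn, hf n _ (D.hL n a x hn)]; exact (seq n).2.1.2.1 a x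
  · intro x a
    obtain ⟨n, hn⟩ := D.mem_fil x
    rw [hf n x hn, hf n _ (D.hR n a x hn)]; exact (seq n).2.1.2.2 x a
  · intro i x hx
    obtain ⟨n, hn⟩ := D.mem_fil x
    rw [hh n x hn]; exact (seq n).2.2.1.1 i x hx
  · intro a x
    obtain ⟨n, hn⟩ := D.mem_fil x
    rw [hh n x hn, hh n _ (D.hL n a x hn)]; exact (seq n).2.2.1.2.1 a x
  · intro x a
    obtain ⟨n, hn⟩ := D.mem_fil x
    rw [hh n x hn, hh n _ (D.hR n a x hn)]; exact (seq n).2.2.1.2.2 x a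
  · intro x
    obtain ⟨n, hn⟩ := D.mem_fil x
    rw [hf n x hn, hf n _ (D.hd n x hn)]; exact (seq n).2.2.2.1 x hn
  · intro x
    obtain ⟨n, hn⟩ := D.mem_fil x
    rw [hf n x hn, hh n x hn, hh n _ (D.hd n x hn)]; exact (seq n).2.2.2.2 x hn

theorem grHom_comp {X Y Z : DGBimod A} {s t r : ℤ} (f : X.V →ₗ[ZMod 2] Y.V)
    (g : Y.V →ₗ[ZMod 2] Z.V) (hf : f ∈ grHomSub X Y s) (hg : g ∈ grHomSub Y Z t) (h : r = s + t) :
    g ∘ₗ f ∈ grHomSub X Z r := by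
  subst h
  refine ⟨fun i x hx => ?_, fun a m => ?_, fun m a => ?_⟩
  · rw [← add_assoc]; exact hg.1 _ _ (hf.1 _ _ hx)
  · simp [hf.2.1, hg.2.1]
  · simp [hf.2.2, hg.2.2]

theorem IsBHom.gr {X Y : DGBimod A} {s : ℤ} {f : X.V →ₗ[ZMod 2] Y.V} (h : IsBHom X Y s f) :
    f ∈ grHomSub X Y s := ⟨h.1, h.2.2.1, h.2.2.2⟩

theorem lift_retract {P X Y : DGBimod A} (hP : IsCellRetract P) {ρ : X.V →ₗ[ZMod 2] Y.V}
    (hρ : IsBHom X Y 0 ρ)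
    (hq : IsQIsoDeg X.V Y.V X.gr Y.gr X.d Y.d 0 ρ) (s : ℤ)
    (u : P.V →ₗ[ZMod 2] X.V) (v : P.V →ₗ[ZMod 2] Y.V)
    (hu : u ∈ grHomSub P X s) (hv : v ∈ grHomSub P Y (s + 1))
    (hdu : ∀ x, u (P.d x) = X.d (u x)) (hdv : ∀ x, Y.d (v x) + v (P.d x) = ρ (u x)) :
    ∃ f ∈ grHomSub P X (s + 1), ∃ h ∈ grHomSub P Y (s + 2),
      (∀ x, u x + (X.d (f x) + f (P.d x)) = 0) ∧
      (∀ x, v x + ρ (f x) + (Y.d (h x) + h (P.d x)) = 0) := by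
  obtain ⟨C, hC, ι, r, hι, hr, -, hrι⟩ := hP
  obtain ⟨D⟩ := cell_CD C hC
  have hrι' : ∀ x, r (ι x) = x := fun x => LinearMap.congr_fun hrι x
  obtain ⟨f, hf, h, hh, e1, e2⟩ := lift_cell D hρ hq s (u ∘ₗ r) (v ∘ₗ r)
    (grHom_comp _ _ hr.gr hu (by ring)) (grHom_comp _ _ hr.gr hv (by ring))
    (fun x => by simp [hr.2.1, hdu]) (fun x => by simp [hr.2.1, hdv])
  refine ⟨f ∘ₗ ι, grHom_comp _ _ hι.gr hf (by ring), h ∘ₗ ι, grHom_comp _ _ hι.gr hh (by ring),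
    fun x => ?_, fun x => ?_⟩
  · have := e1 (ι x)
    simpa [hrι', hι.2.1] using this
  · have := e2 (ι x)
    simpa [hrι', hι.2.1] using this

theorem lift_chain {P X Y : DGBimod A} (hP : IsCellRetract P) {ρ : X.V →ₗ[ZMod 2] Y.V}
    (hρ : IsBHom X Y 0 ρ)
    (hq : IsQIsoDeg X.V Y.V X.gr Y.gr X.d Y.d 0 ρ) (v : P.V →ₗ[ZMod 2] Y.V)
    (hv : IsBHom P Y 0 v) :
    ∃ f, IsBHom P X 0 f ∧ ∃ h ∈ grHomSub P Y 1,
      ∀ x, v x + ρ (f x) + (Y.d (h x) + h (P.d x)) = 0 := by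
  obtain ⟨f, hf, h, hh, e1, e2⟩ := lift_retract hP hρ hq (-1) 0 v (zero_mem _)
    (by rw [show (-1 + 1 : ℤ) = 0 by norm_num]; exact hv.gr)
    (by simp) (by intro x; rw [hv.2.1, two_self]; simp)
  rw [show (-1 + 1 : ℤ) = 0 by norm_num] at hf
  rw [show (-1 + 2 : ℤ) = 1 by norm_num] at hh
  refine ⟨f, ⟨hf.1, fun x => ?_, hf.2.1, hf.2.2⟩, h, hh, e2⟩
  have := e1 x
  rw [LinearMap.zero_apply, zero_add] at this
  exact (two_eq this).symm

/-- The identity of a resolution factors up to homotopy through a finite cell bimodule. -/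
theorem exists_idem (R : DGBimod A) (ρ : R.V →ₗ[ZMod 2] A.diag.V)
    (hres : IsResolution R A.diag ρ) (hsmooth : HomSmooth A) :
    ∃ (C : DGBimod A) (_ : IsFiniteCellBimod C) (α : R.V →ₗ[ZMod 2] C.V)
      (β : C.V →ₗ[ZMod 2] R.V) (h : R.V →ₗ[ZMod 2] R.V),
      IsBHom R C 0 α ∧ IsBHom C R 0 β ∧ h ∈ grHomSub R R 1 ∧
      ∀ x, R.d (h x) + h (R.d x) = x + β (α x) := by
  obtain ⟨R', ρ', ⟨C, hC, ι, r, hι, hr, hinj, hrι⟩, hρ', hq'⟩ := hsmooth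
  obtain ⟨hR, hρ, hq⟩ := hres
  have hR' : IsCellRetract R' := ⟨C, fincell_cell C hC, ι, r, hι, hr, hinj, hrι⟩
  have hrι' : ∀ x, r (ι x) = x := fun x => LinearMap.congr_fun hrι x
  obtain ⟨f, hf, h1, hh1, e1⟩ := lift_chain hR hρ' hq' ρ hρ
  obtain ⟨g, hg, h2, hh2, e2⟩ := lift_chain hR' hρ hq ρ' hρ'
  have hgf : g ∘ₗ f ∈ grHomSub R R 0 := grHom_comp _ _ hf.gr hg.gr (by ring)
  have hid : (LinearMap.id : R.V →ₗ[ZMod 2] R.V) ∈ grHomSub R R 0 :=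
    ⟨fun i x hx => by simpa using hx, fun _ _ => rfl, fun _ _ => rfl⟩
  obtain ⟨h, hh, -, -, e3, -⟩ := lift_retract hR hρ hq 0 (LinearMap.id + g ∘ₗ f)
    (h1 + h2 ∘ₗ f) (add_mem hid hgf)
    (add_mem hh1 (grHom_comp _ _ hf.gr hh2 (by ring)))
    (fun x => by simp [hf.2.1, hg.2.1])
    (fun x => by
      have E1 := e1 x
      have E2 := e2 (f x)
      simp only [LinearMap.add_apply, LinearMap.comp_apply, LinearMap.id_apply, map_add] at *
      rw [hf.2.1]
      refine two_eq ?_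
      have := congrArg₂ (· + ·) E1 E2
      simp only [add_zero] at this
      rw [← this, ← sub_eq_zero]
      refine one_smul_inj ?_
      match_scalars <;> decide)
  refine ⟨C, hC, ι ∘ₗ f, g ∘ₗ r, h, ?_, ?_, hh, ?_⟩
  · refine ⟨fun i x hx => ?_, fun x => ?_, fun a m => ?_, fun m a => ?_⟩
    · simpa using hι.1 _ _ (hf.1 _ _ hx)
    · simp [hf.2.1, hι.2.1]
    · simp [hf.2.2.1, hι.2.2.1]
    · simp [hf.2.2.2, hι.2.2.2]
  · refine ⟨fun i x hx => ?_, fun x => ?_, fun a m => ?_, fun m a => ?_⟩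
    · simpa using hg.1 _ _ (hr.1 _ _ hx)
    · simp [hr.2.1, hg.2.1]
    · simp [hr.2.2.1, hg.2.2.1]
    · simp [hr.2.2.2, hg.2.2.2]
  · intro x
    have := e3 x
    simp only [LinearMap.add_apply, LinearMap.comp_apply, LinearMap.id_apply] at this ⊢
    rw [hrι']
    exact (two_eq this).symm
end lifting

section tate
variable {A : DGA (ZMod 2)}

def TT {R S : DGBimod A} (M : DGBimod A) (a b : R.V →ₗ[ZMod 2] S.V) : T4 R M →ₗ[ZMod 2] T4 S M :=
  TensorProduct.map a (TensorProduct.map LinearMap.id (TensorProduct.map b LinearMap.id))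

theorem TT_tmul {R S : DGBimod A} (M : DGBimod A) (a b : R.V →ₗ[ZMod 2] S.V) (r m r' m') :
    TT M a b (r ⊗ₜ (m ⊗ₜ (r' ⊗ₜ m'))) = a r ⊗ₜ (m ⊗ₜ (b r' ⊗ₜ m')) := rfl

theorem T4_ind {R M : DGBimod A} {p : T4 R M → Prop} (h0 : p 0)
    (hadd : ∀ x y, p x → p y → p (x + y))
    (ht : ∀ r m r' m', p (r ⊗ₜ (m ⊗ₜ (r' ⊗ₜ m')))) (z : T4 R M) : p z := by
  induction z using TensorProduct.induction_on with
  | zero => exact h0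
  | add x y hx hy => exact hadd x y hx hy
  | tmul r t =>
    induction t using TensorProduct.induction_on with
    | zero => rw [tmul_zero]; exact h0
    | add x y hx hy => rw [tmul_add]; exact hadd _ _ hx hy
    | tmul m t =>
      induction t using TensorProduct.induction_on with
      | zero => rw [tmul_zero, tmul_zero]; exact h0
      | add x y hx hy => rw [tmul_add, tmul_add]; exact hadd _ _ hx hy
      | tmul r' m' => exact ht r m r' m'

theorem d4_tmul (R M : DGBimod A) (r m r' m') :
    d4 R M (r ⊗ₜ (m ⊗ₜ (r' ⊗ₜ m'))) = R.d r ⊗ₜ (m ⊗ₜ (r' ⊗ₜ m')) +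
      (r ⊗ₜ (M.d m ⊗ₜ (r' ⊗ₜ m')) + (r ⊗ₜ (m ⊗ₜ (R.d r' ⊗ₜ m')) +
        r ⊗ₜ (m ⊗ₜ (r' ⊗ₜ M.d m')))) := by
  simp [d4, tmul_add]

theorem tau4_tmul (R M : DGBimod A) (r m r' m') :
    tau4 R M (r ⊗ₜ (m ⊗ₜ (r' ⊗ₜ m'))) = r' ⊗ₜ (m' ⊗ₜ (r ⊗ₜ m)) := rfl

theorem tau_tau (R M : DGBimod A) (z : T4 R M) : tau4 R M (tau4 R M z) = z := by
  refine T4_ind (p := fun z => tau4 R M (tau4 R M z) = z) (by simp) ?_ ?_ z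
  · intro x y hx hy; rw [map_add, map_add, hx, hy]
  · intro r m r' m'; rfl

theorem tau_TT (R M : DGBimod A) (a b : R.V →ₗ[ZMod 2] R.V) (z : T4 R M) :
    tau4 R M (TT M a b z) = TT M b a (tau4 R M z) := by
  refine T4_ind (p := fun z => tau4 R M (TT M a b z) = TT M b a (tau4 R M z)) (by simp) ?_ ?_ z
  · intro x y hx hy; simp only [map_add, hx, hy]
  · intro r m r' m'; rfl

theorem tau_d4 (R M : DGBimod A) (z : T4 R M) :
    tau4 R M (d4 R M z) = d4 R M (tau4 R M z) := by
  refine T4_ind (p := fun z => tau4 R M (d4 R M z) = d4 R M (tau4 R M z)) (by simp) ?_ ?_ z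
  · intro x y hx hy; simp only [map_add, hx, hy]
  · intro r m r' m'
    simp only [d4_tmul, tau4_tmul, map_add]; abel

theorem d4_d4 (R M : DGBimod A) (z : T4 R M) : d4 R M (d4 R M z) = 0 := by
  refine T4_ind (p := fun z => d4 R M (d4 R M z) = 0) (by simp) ?_ ?_ z
  · intro x y hx hy; simp only [map_add, hx, hy, add_zero]
  · intro r m r' m'
    simp only [d4_tmul, map_add, R.d_d, M.d_d, tmul_zero, zero_tmul, zero_add, add_zero]
    refine one_smul_inj ?_
    match_scalars <;> decide

theorem d4_TT (R M : DGBimod A) (a b : R.V →ₗ[ZMod 2] R.V) (z : T4 R M) :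
    d4 R M (TT M a b z) + TT M a b (d4 R M z) =
      TT M (R.d ∘ₗ a + a ∘ₗ R.d) b z + TT M a (R.d ∘ₗ b + b ∘ₗ R.d) z := by
  refine T4_ind (p := fun z => d4 R M (TT M a b z) + TT M a b (d4 R M z) =
      TT M (R.d ∘ₗ a + a ∘ₗ R.d) b z + TT M a (R.d ∘ₗ b + b ∘ₗ R.d) z) (by simp) ?_ ?_ z
  · intro x y hx hy
    simp only [map_add]
    have := congrArg₂ (· + ·) hx hy
    rw [add_add_add_comm, this, add_add_add_comm]
  · intro r m r' m'
    simp only [TT_tmul, d4_tmul, map_add, LinearMap.add_apply, LinearMap.comp_apply, tmul_add,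
      add_tmul]
    refine one_smul_inj ?_
    match_scalars <;> decide

theorem TT_add_left {R S : DGBimod A} (M : DGBimod A) (a a' b : R.V →ₗ[ZMod 2] S.V) (z) :
    TT M (a + a') b z = TT M a b z + TT M a' b z := by
  simp [TT, TensorProduct.map_add_left]

theorem TT_add_right {R S : DGBimod A} (M : DGBimod A) (a b b' : R.V →ₗ[ZMod 2] S.V) (z) :
    TT M a (b + b') z = TT M a b z + TT M a b' z := by
  simp [TT, TensorProduct.map_add_left, TensorProduct.map_add_right]

theorem TT_zero_left {R S : DGBimod A} (M : DGBimod A) (b : R.V →ₗ[ZMod 2] S.V) (z) :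
    TT M 0 b z = 0 := by
  have := TT_add_left M 0 0 b z
  rw [add_zero] at this
  exact left_eq_add.1 this

theorem TT_zero_right {R S : DGBimod A} (M : DGBimod A) (b : R.V →ₗ[ZMod 2] S.V) (z) :
    TT M b 0 z = 0 := by
  have := TT_add_right M b 0 0 z
  rw [add_zero] at this
  exact left_eq_add.1 this

theorem TT_id (R M : DGBimod A) (z : T4 R M) : TT M LinearMap.id LinearMap.id z = z := by
  simp [TT]

theorem TT_comp {R S Q : DGBimod A} (M : DGBimod A) (a b : R.V →ₗ[ZMod 2] S.V)
    (c d : S.V →ₗ[ZMod 2] Q.V) (z) : TT M (c ∘ₗ a) (d ∘ₗ b) z = TT M c d (TT M a b z) := by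
  refine T4_ind (p := fun z => TT M (c ∘ₗ a) (d ∘ₗ b) z = TT M c d (TT M a b z)) (by simp) ?_ ?_ z
  · intro x y hx hy; simp only [map_add, hx, hy]
  · intro r m r' m'; rfl

theorem rel_a (R M : DGBimod A) (r a m r' m') : (R.actR r a) ⊗ₜ[ZMod 2] (m ⊗ₜ[ZMod 2] (r' ⊗ₜ[ZMod 2] m')) +
        r ⊗ₜ[ZMod 2] ((M.actL a m) ⊗ₜ[ZMod 2] (r' ⊗ₜ[ZMod 2] m')) ∈ rel4 R M :=
  Submodule.subset_span (Or.inl (Or.inl (Or.inl ⟨r, a, m, r', m', rfl⟩)))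

theorem rel_b (R M : DGBimod A) (r a m r' m') : (R.actL a r) ⊗ₜ[ZMod 2] (m ⊗ₜ[ZMod 2] (r' ⊗ₜ[ZMod 2] m')) +
        r ⊗ₜ[ZMod 2] (m ⊗ₜ[ZMod 2] (r' ⊗ₜ[ZMod 2] (M.actR m' a))) ∈ rel4 R M :=
  Submodule.subset_span (Or.inl (Or.inl (Or.inr ⟨r, a, m, r', m', rfl⟩)))

theorem rel_c (R M : DGBimod A) (r a m r' m') : r ⊗ₜ[ZMod 2] ((M.actR m a) ⊗ₜ[ZMod 2] (r' ⊗ₜ[ZMod 2] m')) +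
        r ⊗ₜ[ZMod 2] (m ⊗ₜ[ZMod 2] ((R.actL a r') ⊗ₜ[ZMod 2] m')) ∈ rel4 R M :=
  Submodule.subset_span (Or.inl (Or.inr ⟨r, a, m, r', m', rfl⟩))

theorem rel_d (R M : DGBimod A) (r a m r' m') : r ⊗ₜ[ZMod 2] (m ⊗ₜ[ZMod 2] ((R.actR r' a) ⊗ₜ[ZMod 2] m')) +
        r ⊗ₜ[ZMod 2] (m ⊗ₜ[ZMod 2] (r' ⊗ₜ[ZMod 2] (M.actL a m'))) ∈ rel4 R M :=
  Submodule.subset_span (Or.inr ⟨r, a, m, r', m', rfl⟩)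

theorem rel4_map {R M : DGBimod A} {V : Type} [AddCommGroup V] [Module (ZMod 2) V]
    (f : T4 R M →ₗ[ZMod 2] V) (N : Submodule (ZMod 2) V)
    (ha : ∀ r a m r' m', f ((R.actR r a) ⊗ₜ[ZMod 2] (m ⊗ₜ[ZMod 2] (r' ⊗ₜ[ZMod 2] m')) +
        r ⊗ₜ[ZMod 2] ((M.actL a m) ⊗ₜ[ZMod 2] (r' ⊗ₜ[ZMod 2] m'))) ∈ N)
    (hb : ∀ r a m r' m', f ((R.actL a r) ⊗ₜ[ZMod 2] (m ⊗ₜ[ZMod 2] (r' ⊗ₜ[ZMod 2] m')) +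
        r ⊗ₜ[ZMod 2] (m ⊗ₜ[ZMod 2] (r' ⊗ₜ[ZMod 2] (M.actR m' a)))) ∈ N)
    (hc : ∀ r a m r' m', f (r ⊗ₜ[ZMod 2] ((M.actR m a) ⊗ₜ[ZMod 2] (r' ⊗ₜ[ZMod 2] m')) +
        r ⊗ₜ[ZMod 2] (m ⊗ₜ[ZMod 2] ((R.actL a r') ⊗ₜ[ZMod 2] m'))) ∈ N)
    (hd : ∀ r a m r' m', f (r ⊗ₜ[ZMod 2] (m ⊗ₜ[ZMod 2] ((R.actR r' a) ⊗ₜ[ZMod 2] m')) +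
        r ⊗ₜ[ZMod 2] (m ⊗ₜ[ZMod 2] (r' ⊗ₜ[ZMod 2] (M.actL a m')))) ∈ N) :
    ∀ z ∈ rel4 R M, f z ∈ N := by
  intro z hz
  refine (Submodule.span_le.2 ?_ : rel4 R M ≤ Submodule.comap f N) hz
  rintro _ (((⟨r, a, m, r', m', rfl⟩ | ⟨r, a, m, r', m', rfl⟩) | ⟨r, a, m, r', m', rfl⟩) |
    ⟨r, a, m, r', m', rfl⟩)
  · exact ha _ _ _ _ _
  · exact hb _ _ _ _ _
  · exact hc _ _ _ _ _
  · exact hd _ _ _ _ _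

theorem rel4_TT {R S M : DGBimod A} {s t : ℤ} (a b : R.V →ₗ[ZMod 2] S.V) (ha : a ∈ grHomSub R S s)
    (hb : b ∈ grHomSub R S t) : ∀ z ∈ rel4 R M, TT M a b z ∈ rel4 S M := by
  apply rel4_map
  · intro r x m r' m'
    rw [map_add, TT_tmul, TT_tmul, ha.2.2]; exact rel_a _ _ _ _ _ _ _
  · intro r x m r' m'
    rw [map_add, TT_tmul, TT_tmul, ha.2.1]; exact rel_b _ _ _ _ _ _ _
  · intro r x m r' m'
    rw [map_add, TT_tmul, TT_tmul, hb.2.1]; exact rel_c _ _ _ _ _ _ _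
  · intro r x m r' m'
    rw [map_add, TT_tmul, TT_tmul, hb.2.2]; exact rel_d _ _ _ _ _ _ _

theorem rel4_tau {R M : DGBimod A} : ∀ z ∈ rel4 R M, tau4 R M z ∈ rel4 R M := by
  apply rel4_map
  · intro r x m r' m'
    rw [map_add, tau4_tmul, tau4_tmul]; exact rel_d _ _ _ _ _ _ _
  · intro r x m r' m'
    rw [map_add, tau4_tmul, tau4_tmul, add_comm]; exact rel_c _ _ _ _ _ _ _
  · intro r x m r' m'
    rw [map_add, tau4_tmul, tau4_tmul, add_comm]; exact rel_b _ _ _ _ _ _ _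
  · intro r x m r' m'
    rw [map_add, tau4_tmul, tau4_tmul]; exact rel_a _ _ _ _ _ _ _

theorem rel4_d4 {R M : DGBimod A} : ∀ z ∈ rel4 R M, d4 R M z ∈ rel4 R M := by
  apply rel4_map
  · intro r x m r' m'
    have := add_mem (add_mem (add_mem (add_mem (rel_a R M (R.d r) x m r' m')
      (rel_a R M r (A.d x) m r' m')) (rel_a R M r x (M.d m) r' m'))
      (rel_a R M r x m (R.d r') m')) (rel_a R M r x m r' (M.d m'))
    convert this using 1
    simp only [map_add, d4_tmul, d_actR, d_actL, tmul_add, add_tmul]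
    abel
  · intro r x m r' m'
    have := add_mem (add_mem (add_mem (add_mem (rel_b R M (R.d r) x m r' m')
      (rel_b R M r (A.d x) m r' m')) (rel_b R M r x (M.d m) r' m'))
      (rel_b R M r x m (R.d r') m')) (rel_b R M r x m r' (M.d m'))
    convert this using 1
    simp only [map_add, d4_tmul, d_actR, d_actL, tmul_add, add_tmul]
    abel
  · intro r x m r' m'
    have := add_mem (add_mem (add_mem (add_mem (rel_c R M (R.d r) x m r' m')
      (rel_c R M r (A.d x) m r' m')) (rel_c R M r x (M.d m) r' m'))
      (rel_c R M r x m (R.d r') m')) (rel_c R M r x m r' (M.d m'))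
    convert this using 1
    simp only [map_add, d4_tmul, d_actR, d_actL, tmul_add, add_tmul]
    abel
  · intro r x m r' m'
    have := add_mem (add_mem (add_mem (add_mem (rel_d R M (R.d r) x m r' m')
      (rel_d R M r (A.d x) m r' m')) (rel_d R M r x (M.d m) r' m'))
      (rel_d R M r x m (R.d r') m')) (rel_d R M r x m r' (M.d m'))
    convert this using 1
    simp only [map_add, d4_tmul, d_actR, d_actL, tmul_add, add_tmul]
    abel

theorem gr4_TT {R S M : DGBimod A} {s t : ℤ} (a b : R.V →ₗ[ZMod 2] S.V) (ha : a ∈ grHomSub R S s)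
    (hb : b ∈ grHomSub R S t) (n n' : ℤ) (hn : n' = n + s + t) :
    ∀ z ∈ gr4 R M n, TT M a b z ∈ gr4 S M n' := by
  intro z hz
  refine (Submodule.span_le.2 ?_ : gr4 R M n ≤ Submodule.comap (TT M a b) (gr4 S M n')) hz
  rintro _ ⟨i₁, j₁, i₂, j₂, r, hr, m, hm, r', hr', m', hm', rfl, rfl⟩
  exact Submodule.subset_span ⟨i₁ + s, j₁, i₂ + t, j₂, a r, ha.1 _ _ hr, m, hm, b r',
    hb.1 _ _ hr', m', hm', by rw [hn]; ring, rfl⟩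

theorem gr4_tau {R M : DGBimod A} (n : ℤ) :
    ∀ z ∈ gr4 R M n, tau4 R M z ∈ gr4 R M n := by
  intro z hz
  refine (Submodule.span_le.2 ?_ : gr4 R M n ≤ Submodule.comap (tau4 R M) (gr4 R M n)) hz
  rintro _ ⟨i₁, j₁, i₂, j₂, r, hr, m, hm, r', hr', m', hm', rfl, rfl⟩
  exact Submodule.subset_span ⟨i₂, j₂, i₁, j₁, r', hr', m', hm', r, hr, m, hm, by ring, rfl⟩

theorem bounded_abs {M : DGBimod A} (hbdd : BoundedBimod M) :
    ∃ K : ℤ, ∀ i, ∀ x ∈ M.gr i, K < |i| → x = 0 := by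
  obtain ⟨u, hu⟩ := hbdd
  refine ⟨∑ i ∈ u, |i|, fun i x hx hi => ?_⟩
  by_cases h : i ∈ u
  · have := Finset.single_le_sum (f := fun i : ℤ => |i|) (fun i _ => abs_nonneg i) h
    exact absurd (lt_of_lt_of_le hi this) (lt_irrefl _)
  · rw [hu i h] at hx; exact hx

theorem gr4_bounded (C M : DGBimod A) (hC : IsFiniteCellBimod C) (hbdd : BoundedBimod M) :
    ∃ K : ℤ, ∀ q, K < |q| → ∀ z ∈ gr4 C M q, z ∈ rel4 C M := by
  obtain ⟨D, hfin, n₀, hn₀⟩ := fincell_CD C hC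
  obtain ⟨K₂, hK₂⟩ := bounded_abs hbdd
  let G' := {x : D.G // x.1 < n₀}
  have hG' : Finite G' := by
    have : Function.Injective (fun x : G' => (⟨⟨x.1.1, x.2⟩, x.1.2⟩ : Σ n : Fin n₀, D.I n)) := by
      rintro ⟨⟨n, i⟩, h⟩ ⟨⟨m, j⟩, h'⟩ e
      simp only [Sigma.mk.injEq, Fin.mk.injEq] at e
      obtain ⟨rfl, e⟩ := e
      obtain rfl := eq_of_heq e
      rfl
    exact Finite.of_injective _ this
  obtain ⟨K₁, hK₁⟩ := Finite.exists_le (fun x : G' => |D.deg x.1.1 x.1.2|)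
  have hspan := homog_span C (fun x : G' => D.gg x.1) (fun x => D.deg x.1.1 x.1.2)
    (fun x => D.g_gr _ _) (fun v => D.fil_le n₀ (by rw [hn₀]; trivial))
  refine ⟨2 * K₁ + 2 * K₂, fun q hq z hz => ?_⟩
  refine (Submodule.span_le.2 ?_ : gr4 C M q ≤ rel4 C M) hz
  rintro _ ⟨i₁, j₁, i₂, j₂, r, hr, m, hm, r', hr', m', hm', hsum, rfl⟩
  refine (Submodule.span_le.2 ?_ : _ ≤ Submodule.comap
    ((TensorProduct.mk (ZMod 2) C.V (M.V ⊗[ZMod 2] (C.V ⊗[ZMod 2] M.V))).flip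
      (m ⊗ₜ (r' ⊗ₜ m'))) (rel4 C M)) (hspan i₁ hr)
  rintro _ ⟨x, p, p', a, ha, b, hb, hx, rfl⟩
  refine (Submodule.span_le.2 ?_ : _ ≤ Submodule.comap
    ((TensorProduct.mk (ZMod 2) C.V (M.V ⊗[ZMod 2] (C.V ⊗[ZMod 2] M.V))
        (C.actR (C.actL a (D.gg x.1)) b)) ∘ₗ
      (TensorProduct.mk (ZMod 2) M.V (C.V ⊗[ZMod 2] M.V) m) ∘ₗ
      (TensorProduct.mk (ZMod 2) C.V M.V).flip m') (rel4 C M)) (hspan i₂ hr')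
  rintro _ ⟨y, s, s', a', ha', b', hb', hy, rfl⟩
  change (C.actR (C.actL a (D.gg x.1)) b) ⊗ₜ[ZMod 2]
    (m ⊗ₜ[ZMod 2] (C.actR (C.actL a' (D.gg y.1)) b' ⊗ₜ[ZMod 2] m')) ∈ rel4 C M
  have h1 := M.actR_gr _ _ _ (M.actL_gr _ _ _ hb _ hm) _ ha'
  have h2 := M.actR_gr _ _ _ (M.actL_gr _ _ _ hb' _ hm') _ ha
  have e4 : (D.gg x.1) ⊗ₜ[ZMod 2] (M.actR (M.actL b m) a' ⊗ₜ[ZMod 2] ((D.gg y.1) ⊗ₜ[ZMod 2]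
      (M.actL b' (M.actR m' a)))) = 0 := by
    rw [← M.actLR]
    by_cases c1 : K₂ < |p' + j₁ + s|
    · rw [hK₂ _ _ h1 c1]; simp
    by_cases c2 : K₂ < |s' + j₂ + p|
    · rw [hK₂ _ _ h2 c2]; simp
    exfalso
    have d1 := hK₁ x
    have d2 := hK₁ y
    simp only [abs_le, lt_abs, not_or, not_lt] at *
    omega
  have mem_of : ∀ X Y : T4 C M, X + Y ∈ rel4 C M → Y ∈ rel4 C M → X ∈ rel4 C M :=
    fun X Y h1 h2 => (Submodule.add_mem_iff_left _ h2).1 h1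
  refine mem_of _ _ (rel_a C M _ b _ _ _) ?_
  refine mem_of _ _ (rel_b C M _ a _ _ _) ?_
  rw [C.actLR]
  have hc := rel_c C M (D.gg x.1) a' (M.actL b m) (C.actR (D.gg y.1) b') (M.actR m' a)
  rw [add_comm] at hc
  refine mem_of _ _ hc ?_
  refine mem_of _ _ (rel_d C M _ b' _ _ _) ?_
  rw [e4]
  exact zero_mem _

end tate

section final
variable {A : DGA (ZMod 2)}

section identities
variable {R : DGBimod A} (M : DGBimod A) (e h : R.V →ₗ[ZMod 2] R.V)

def H0 : T4 R M →ₗ[ZMod 2] T4 R M := TT M h LinearMap.id + TT M e h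

def H1 : T4 R M →ₗ[ZMod 2] T4 R M := TT M h h ∘ₗ tau4 R M

theorem dd_zero (f : R.V →ₗ[ZMod 2] R.V) (hf : R.d ∘ₗ f = f ∘ₗ R.d) :
    R.d ∘ₗ f + f ∘ₗ R.d = 0 := by
  rw [hf]; ext x; exact two_self _

theorem ident1 (he : R.d ∘ₗ e = e ∘ₗ R.d) (hh : R.d ∘ₗ h + h ∘ₗ R.d = LinearMap.id + e)
    (z : T4 R M) : TT M e e z + d4 R M (H0 M e h z) + H0 M e h (d4 R M z) = z := by
  have h1 := d4_TT R M h LinearMap.id z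
  have h2 := d4_TT R M e h z
  rw [hh, dd_zero LinearMap.id rfl, TT_zero_right, TT_add_left, TT_id, add_zero] at h1
  rw [hh, dd_zero e he, TT_zero_left, TT_add_right, zero_add] at h2
  simp only [H0, LinearMap.add_apply, map_add]
  have h3 : TT M e e z + (d4 R M (TT M h LinearMap.id z) + d4 R M (TT M e h z)) +
      (TT M h LinearMap.id (d4 R M z) + TT M e h (d4 R M z)) =
      TT M e e z + ((d4 R M (TT M h LinearMap.id z) + TT M h LinearMap.id (d4 R M z)) +
      (d4 R M (TT M e h z) + TT M e h (d4 R M z))) := by abel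
  rw [h3, h1, h2]
  refine one_smul_inj ?_
  match_scalars <;> decide

theorem ident2 (hh : R.d ∘ₗ h + h ∘ₗ R.d = LinearMap.id + e) (z : T4 R M) :
    tau4 R M (H0 M e h z) + H0 M e h (tau4 R M z) +
      (d4 R M (H1 M h z) + H1 M h (d4 R M z)) = 0 := by
  have h1 := d4_TT R M h h (tau4 R M z)
  rw [hh, TT_add_left, TT_add_right] at h1
  simp only [H0, H1, LinearMap.add_apply, LinearMap.comp_apply, map_add, tau_TT, tau_d4]
  rw [h1]
  refine one_smul_inj ?_
  match_scalars <;> decide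

theorem ident3 (z : T4 R M) : tau4 R M (H1 M h z) + H1 M h (tau4 R M z) = 0 := by
  simp only [H1, LinearMap.comp_apply, tau_TT, tau_tau]
  exact two_self _

end identities

def op {V : Type} [AddCommGroup V] [Module (ZMod 2) V] (f g : V →ₗ[ZMod 2] V) :
    (ℤ →₀ V) →ₗ[ZMod 2] (ℤ →₀ V) :=
  (Finsupp.lmapDomain V (ZMod 2) (fun p : ℤ => p - 1)).comp (Finsupp.mapRange.linearMap g) +
    Finsupp.mapRange.linearMap f

theorem op_apply {V : Type} [AddCommGroup V] [Module (ZMod 2) V] (f g : V →ₗ[ZMod 2] V)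
    (x : ℤ →₀ V) (p : ℤ) : op f g x p = g (x (p + 1)) + f (x p) := by
  have hinj : Function.Injective (fun p : ℤ => p - 1) := fun a b h => by simpa using h
  have h1 := Finsupp.mapDomain_apply hinj (Finsupp.mapRange.linearMap g x) (p + 1)
  simp only [add_sub_cancel_right] at h1
  simp only [op, LinearMap.add_apply, LinearMap.comp_apply, Finsupp.add_apply,
    Finsupp.lmapDomain_apply]
  rw [h1]
  rfl

theorem op_single {V : Type} [AddCommGroup V] [Module (ZMod 2) V] (f g : V →ₗ[ZMod 2] V)
    (p : ℤ) (z : V) : op f g (Finsupp.single p z) =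
      Finsupp.single (p - 1) (g z) + Finsupp.single p (f z) := by
  simp [op]

variable (R M : DGBimod A)

theorem mem_TN (x : ℤ →₀ T4 R M) :
    x ∈ (TateBicx R M).N ↔ ∀ p, x p ∈ rel4 R M := by
  refine (Submodule.mem_iInf (fun p : ℤ => Submodule.comap (Finsupp.lapply p) (rel4 R M))).trans ?_
  rfl

theorem op_TN (f g : T4 R M →ₗ[ZMod 2] T4 R M) (hf : ∀ z ∈ rel4 R M, f z ∈ rel4 R M)
    (hg : ∀ z ∈ rel4 R M, g z ∈ rel4 R M) (x : ℤ →₀ T4 R M) (hx : x ∈ (TateBicx R M).N) :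
    op f g x ∈ (TateBicx R M).N := by
  rw [mem_TN] at hx ⊢
  intro p
  rw [op_apply]
  exact add_mem (hg _ (hx _)) (hf _ (hx _))

theorem single_TN (p : ℤ) (z : T4 R M) (hz : z ∈ rel4 R M) :
    tateSingle R M p z ∈ (TateBicx R M).N := by
  refine (mem_TN R M _).2 fun q => ?_
  change (Finsupp.single p z : ℤ →₀ T4 R M) q ∈ _
  rw [Finsupp.single_apply]
  split_ifs
  · exact hz
  · exact zero_mem _

theorem op_DD (x : ℤ →₀ T4 R M) : op (d4 R M) (LinearMap.id + tau4 R M)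
    (op (d4 R M) (LinearMap.id + tau4 R M) x) = 0 := by
  ext p
  simp only [op_apply, map_add, LinearMap.add_apply, LinearMap.id_apply, tau_tau, tau_d4, d4_d4,
    Finsupp.zero_apply]
  refine one_smul_inj ?_
  match_scalars <;> decide

theorem op_H (e h : R.V →ₗ[ZMod 2] R.V) (he : R.d ∘ₗ e = e ∘ₗ R.d)
    (hh : R.d ∘ₗ h + h ∘ₗ R.d = LinearMap.id + e) (x : ℤ →₀ T4 R M) :
    x = op (TT M e e) 0 x + op (d4 R M) (LinearMap.id + tau4 R M) (op (H0 M e h) (H1 M h) x) +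
      op (H0 M e h) (H1 M h) (op (d4 R M) (LinearMap.id + tau4 R M) x) := by
  ext p
  have h1 := ident1 M e h he hh (x p)
  have h2 := ident2 M e h hh (x (p + 1))
  have h3 := ident3 M h (x (p + 1 + 1))
  simp only [Finsupp.add_apply, op_apply, map_add, LinearMap.add_apply, LinearMap.id_apply,
    LinearMap.zero_apply]
  have h4 := congrArg₂ (· + ·) (congrArg₂ (· + ·) h1 h2) h3
  simp only [add_zero] at h4
  refine h4.symm.trans ?_
  refine one_smul_inj ?_
  match_scalars <;> decide

theorem mem_gr (i q : ℤ) (z : T4 R M) (hz : z ∈ gr4 R M q) :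
    tateSingle R M i z ∈ (TateBicx R M).gr i q := ⟨z, hz, rfl⟩

theorem mem_Fcol (p n i q : ℤ) (hi : i ≤ p) (hn : i + q = n) (z : T4 R M) (hz : z ∈ gr4 R M q) :
    tateSingle R M i z ∈ (TateBicx R M).Fcol p n := by
  obtain rfl : q = n - i := by omega
  exact Submodule.mem_iSup_of_mem i (Submodule.mem_iSup_of_mem hi (mem_gr R M _ _ z hz))

theorem mem_Frow (p n i q : ℤ) (hi : q ≤ p) (hn : i + q = n) (z : T4 R M) (hz : z ∈ gr4 R M q) :
    tateSingle R M i z ∈ (TateBicx R M).Frow p n := by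
  obtain rfl : i = n - q := by omega
  exact Submodule.mem_iSup_of_mem q (Submodule.mem_iSup_of_mem hi (mem_gr R M _ _ z hz))

theorem mem_totGr (n i q : ℤ) (hn : i + q = n) (z : T4 R M) (hz : z ∈ gr4 R M q) :
    tateSingle R M i z ∈ (TateBicx R M).totGr n := by
  obtain rfl : q = n - i := by omega
  exact Submodule.mem_iSup_of_mem i (mem_gr R M _ _ z hz)

theorem Fcol_le (p n : ℤ) (S : Submodule (ZMod 2) (TateBicx R M).T)
    (h : ∀ i q, i ≤ p → i + q = n → ∀ z ∈ gr4 R M q, tateSingle R M i z ∈ S) :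
    (TateBicx R M).Fcol p n ≤ S := by
  refine iSup₂_le fun i hi => ?_
  rintro _ ⟨z, hz, rfl⟩
  exact h i (n - i) hi (by ring) z hz

theorem Frow_le (p n : ℤ) (S : Submodule (ZMod 2) (TateBicx R M).T)
    (h : ∀ i q, q ≤ p → i + q = n → ∀ z ∈ gr4 R M q, tateSingle R M i z ∈ S) :
    (TateBicx R M).Frow p n ≤ S := by
  refine iSup₂_le fun i hi => ?_
  rintro _ ⟨z, hz, rfl⟩
  exact h (n - i) i hi (by ring) z hz

theorem totGr_le (n : ℤ) (S : Submodule (ZMod 2) (TateBicx R M).T)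
    (h : ∀ i q, i + q = n → ∀ z ∈ gr4 R M q, tateSingle R M i z ∈ S) :
    (TateBicx R M).totGr n ≤ S := by
  refine iSup_le fun i => ?_
  rintro _ ⟨z, hz, rfl⟩
  exact h i (n - i) (by ring) z hz

def opT (f g : T4 R M →ₗ[ZMod 2] T4 R M) : (TateBicx R M).T →ₗ[ZMod 2] (TateBicx R M).T :=
  op f g

theorem opT_single (f g : T4 R M →ₗ[ZMod 2] T4 R M) (p : ℤ) (z : T4 R M) :
    opT R M f g (tateSingle R M p z) =
      tateSingle R M (p - 1) (g z) + tateSingle R M p (f z) := op_single f g p z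

theorem D_eq : (TateBicx R M).D = opT R M (d4 R M) (LinearMap.id + tau4 R M) := rfl

theorem tateSingle_zero (p : ℤ) : tateSingle R M p 0 = 0 := Finsupp.single_zero p

theorem main_conv (C : DGBimod A) (hC : IsFiniteCellBimod C) (hbdd : BoundedBimod M)
    (α : R.V →ₗ[ZMod 2] C.V) (β : C.V →ₗ[ZMod 2] R.V) (h : R.V →ₗ[ZMod 2] R.V)
    (hα : IsBHom R C 0 α) (hβ : IsBHom C R 0 β) (hh : h ∈ grHomSub R R 1)
    (he : R.d ∘ₗ (β ∘ₗ α) = (β ∘ₗ α) ∘ₗ R.d)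
    (hdh : R.d ∘ₗ h + h ∘ₗ R.d = LinearMap.id + β ∘ₗ α) :
    (TateBicx R M).convergesTo (TateBicx R M).Fcol ∧
    (TateBicx R M).convergesTo (TateBicx R M).Frow := by
  obtain ⟨K, hK⟩ := gr4_bounded C M hC hbdd
  set e := β ∘ₗ α with hedef
  have heg : e ∈ grHomSub R R 0 := grHom_comp α β hα.gr hβ.gr (by norm_num)
  have hidg : (LinearMap.id : R.V →ₗ[ZMod 2] R.V) ∈ grHomSub R R 0 := by
    refine ⟨fun i x hx => by simpa using hx, fun _ _ => rfl, fun _ _ => rfl⟩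
  have hφrel : ∀ q, K < |q| → ∀ z ∈ gr4 R M q, TT M e e z ∈ rel4 R M := by
    intro q hq z hz
    rw [hedef, TT_comp]
    exact rel4_TT β β hβ.gr hβ.gr _ (hK q hq _ (gr4_TT α α hα.gr hα.gr q q (by ring) z hz))
  have hφgr : ∀ q, ∀ z ∈ gr4 R M q, TT M e e z ∈ gr4 R M q := fun q =>
    gr4_TT e e heg heg q q (by ring)
  have hH0gr : ∀ q, ∀ z ∈ gr4 R M q, H0 M e h z ∈ gr4 R M (q + 1) := fun q z hz =>
    add_mem (gr4_TT h LinearMap.id hh hidg q _ (by ring) z hz) (gr4_TT e h heg hh q _ (by ring) z hz)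
  have hH1gr : ∀ q, ∀ z ∈ gr4 R M q, H1 M h z ∈ gr4 R M (q + 2) := fun q z hz =>
    gr4_TT h h hh hh q _ (by ring) _ (gr4_tau q z hz)
  have hDN : ∀ x ∈ (TateBicx R M).N, (TateBicx R M).D x ∈ (TateBicx R M).N :=
    op_TN R M _ _ rel4_d4 (fun z hz => add_mem hz (rel4_tau z hz))
  have hDD : ∀ x, (TateBicx R M).D ((TateBicx R M).D x) = 0 := op_DD R M
  have hφN : ∀ x ∈ (TateBicx R M).N, opT R M (TT M e e) 0 x ∈ (TateBicx R M).N :=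
    op_TN R M _ _ (rel4_TT e e heg heg) (fun z hz => zero_mem _)
  have hHN : ∀ x ∈ (TateBicx R M).N, opT R M (H0 M e h) (H1 M h) x ∈ (TateBicx R M).N :=
    op_TN R M _ _ (fun z hz => add_mem (rel4_TT h _ hh hidg z hz) (rel4_TT e h heg hh z hz))
      (fun z hz => rel4_TT h h hh hh _ (rel4_tau z hz))
  have hHH : ∀ x, x = opT R M (TT M e e) 0 x + (TateBicx R M).D (opT R M (H0 M e h) (H1 M h) x) +
      opT R M (H0 M e h) (H1 M h) ((TateBicx R M).D x) := op_H R M e h he hdh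
  have hφs : ∀ i z, opT R M (TT M e e) 0 (tateSingle R M i z) = tateSingle R M i (TT M e e z) := by
    intro i z
    rw [opT_single, LinearMap.zero_apply, tateSingle_zero, zero_add]
  have hφsN : ∀ i q, K < |q| → ∀ z ∈ gr4 R M q,
      opT R M (TT M e e) 0 (tateSingle R M i z) ∈ (TateBicx R M).N := by
    intro i q hq z hz
    rw [hφs]
    exact single_TN R M _ _ (hφrel q hq z hz)
  refine ⟨conv_crit _ _ (opT R M (TT M e e) 0) (opT R M (H0 M e h) (H1 M h)) 0 ?_ ?_ hDN hDD hφN hHN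
    hHH ?_ ?_ ?_ ?_, conv_crit _ _ (opT R M (TT M e e) 0) (opT R M (H0 M e h) (H1 M h)) 2 ?_ ?_ hDN
    hDD hφN hHN hHH ?_ ?_ ?_ ?_⟩
  · intro p p' n hp
    exact Fcol_le _ _ _ _ _ fun i q hi hn z hz => mem_Fcol _ _ _ _ i q (hi.trans hp) hn z hz
  · intro p n
    exact Fcol_le _ _ _ _ _ fun i q hi hn z hz => mem_totGr _ _ _ i q hn z hz
  · intro p n
    refine fun x hx => Submodule.mem_comap.1 (Fcol_le _ _ _ _ (Submodule.comap (opT R M (TT M e e) 0) _)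
      (fun i q hi hn z hz => ?_) hx)
    rw [Submodule.mem_comap, hφs]
    exact Submodule.mem_sup_left (mem_Fcol _ _ _ _ i q hi hn _ (hφgr q z hz))
  · intro p n
    refine fun x hx => Submodule.mem_comap.1 (Fcol_le _ _ _ _ (Submodule.comap (opT R M (H0 M e h) (H1 M h)) _)
      (fun i q hi hn z hz => ?_) hx)
    rw [Submodule.mem_comap, opT_single]
    exact Submodule.mem_sup_left (add_mem
      (mem_Fcol _ _ _ _ (i - 1) (q + 2) (by omega) (by omega) _ (hH1gr q z hz))
      (mem_Fcol _ _ _ _ i (q + 1) (by omega) (by omega) _ (hH0gr q z hz)))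
  · intro n
    refine ⟨n - K - 1, fun p hp => ?_⟩
    refine fun x hx => Submodule.mem_comap.1 (Fcol_le _ _ _ _ (Submodule.comap (opT R M (TT M e e) 0) _)
      (fun i q hi hn z hz => ?_) hx)
    exact hφsN i q (lt_abs.2 (Or.inl (by omega))) z hz
  · intro n
    refine ⟨n + K, ?_⟩
    refine fun x hx => Submodule.mem_comap.1 (totGr_le _ _ _ (Submodule.comap (opT R M (TT M e e) 0) _)
      (fun i q hn z hz => ?_) hx)
    rw [Submodule.mem_comap]
    by_cases hq : K < |q|
    · exact Submodule.mem_sup_right (hφsN i q hq z hz)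
    · rw [hφs]
      have := (abs_le.1 (not_lt.1 hq)).1
      exact Submodule.mem_sup_left (mem_Fcol _ _ _ _ i q (by omega) hn _ (hφgr q z hz))
  · intro p p' n hp
    exact Frow_le _ _ _ _ _ fun i q hi hn z hz => mem_Frow _ _ _ _ i q (hi.trans hp) hn z hz
  · intro p n
    exact Frow_le _ _ _ _ _ fun i q hi hn z hz => mem_totGr _ _ _ i q hn z hz
  · intro p n
    refine fun x hx => Submodule.mem_comap.1 (Frow_le _ _ _ _ (Submodule.comap (opT R M (TT M e e) 0) _)
      (fun i q hi hn z hz => ?_) hx)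
    rw [Submodule.mem_comap, hφs]
    exact Submodule.mem_sup_left (mem_Frow _ _ _ _ i q hi hn _ (hφgr q z hz))
  · intro p n
    refine fun x hx => Submodule.mem_comap.1 (Frow_le _ _ _ _ (Submodule.comap (opT R M (H0 M e h) (H1 M h)) _)
      (fun i q hi hn z hz => ?_) hx)
    rw [Submodule.mem_comap, opT_single]
    exact Submodule.mem_sup_left (add_mem
      (mem_Frow _ _ _ _ (i - 1) (q + 2) (by omega) (by omega) _ (hH1gr q z hz))
      (mem_Frow _ _ _ _ i (q + 1) (by omega) (by omega) _ (hH0gr q z hz)))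
  · intro n
    refine ⟨-K - 1, fun p hp => ?_⟩
    refine fun x hx => Submodule.mem_comap.1 (Frow_le _ _ _ _ (Submodule.comap (opT R M (TT M e e) 0) _)
      (fun i q hi hn z hz => ?_) hx)
    exact hφsN i q (lt_abs.2 (Or.inr (by omega))) z hz
  · intro n
    refine ⟨K, ?_⟩
    refine fun x hx => Submodule.mem_comap.1 (totGr_le _ _ _ (Submodule.comap (opT R M (TT M e e) 0) _)
      (fun i q hn z hz => ?_) hx)
    rw [Submodule.mem_comap]
    by_cases hq : K < |q|
    · exact Submodule.mem_sup_right (hφsN i q hq z hz)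
    · rw [hφs]
      have := (abs_le.1 (not_lt.1 hq)).2
      exact Submodule.mem_sup_left (mem_Frow _ _ _ _ i q (by omega) hn _ (hφgr q z hz))

end final

/-- **Proposition 3.7.** If `A` is homologically smooth and `M` is a bounded dg
`(A,A)`-bimodule, then both spectral sequences `ʰᵛE` and `ᵛʰE` attached to the
Hochschild–Tate bicomplex `HC^{Tate}(A, M ⊗̃_A M)` converge to the homology of its total
complex. -/
theorem tate_spectral_sequences_converge
    (A : DGA (ZMod 2)) (R : DGBimod A) (ρ : R.V →ₗ[ZMod 2] A.diag.V)
    (hres : IsResolution R A.diag ρ)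
    (hsmooth : HomSmooth A)
    (M : DGBimod A) (hbdd : BoundedBimod M) :
    (TateBicx R M).convergesTo (TateBicx R M).Fcol ∧
    (TateBicx R M).convergesTo (TateBicx R M).Frow := by
  obtain ⟨C, hC, α, β, h, hα, hβ, hh, hdh⟩ := exists_idem R ρ hres hsmooth
  have hdh' : R.d ∘ₗ h + h ∘ₗ R.d = LinearMap.id + β ∘ₗ α := LinearMap.ext hdh
  refine main_conv R M C hC hbdd α β h hα hβ hh ?_ hdh'
  ext x
  have h1 := hdh (R.d x)
  have h2 := congrArg R.d (hdh x)
  simp only [map_add, R.d_d, map_zero, zero_add, add_zero] at h1 h2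
  exact add_left_cancel (h2.symm.trans h1)
end LT
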